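/- arXiv:1209.1167 — 3 statements merged into one kernel-verified Lean document; each statement's English description precedes it below -/
import Mathlib

section
/- Every finite string group generated by involutions (sggi) is covered by a finite string C-group. That is, if G is a finite group generated by elements g_0, ..., g_{n-1} with g_i^2 = 1 for all i and (g_j g_k)^2 = 1 whenever |j - k| > 1, then there exists a finite group G' generated by elements g'_0, ..., g'_{n-1}, each of order exactly 2, satisfying (g'_j g'_k)^2 = 1 for |j - k| > 1 and the intersection condition, together with a group epimorphism G' → G mapping g'_i to g_i for each i. -/
/-- A string group generated by involutions (sggi): the group is generated by
`g 0, ..., g (n-1)`, each `g i` squares to the identity, and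
`(g i * g j)^2 = 1` whenever `|i - j| > 1`. -/
def IsSggi {G : Type*} [Group G] {n : ℕ} (g : Fin n → G) : Prop :=
  Subgroup.closure (Set.range g) = ⊤ ∧ (∀ i, g i ^ 2 = 1) ∧
    ∀ i j : Fin n, 1 < |(i : ℤ) - (j : ℤ)| → (g i * g j) ^ 2 = 1

/-- A string C-group: an sggi whose generators have order exactly `2` and which
satisfies the intersection condition. -/
def IsStringCGroup {G : Type*} [Group G] {n : ℕ} (g : Fin n → G) : Prop :=
  IsSggi g ∧ (∀ i, orderOf (g i) = 2) ∧
    ∀ I J : Set (Fin n),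
      Subgroup.closure (g '' I) ⊓ Subgroup.closure (g '' J)
        = Subgroup.closure (g '' (I ∩ J))

/-- `H` (generated by `h 0, ..., h (k-1)`) covers the sggi `⟨g 0, ..., g (k-1)⟩`:
there is a homomorphism sending each `h t` to `g t` whose range is exactly the
subgroup generated by the `g t`, i.e. an epimorphism of sggi's. -/
def SggiCovers {H G : Type*} [Group H] [Group G] {k : ℕ}
    (h : Fin k → H) (g : Fin k → G) : Prop :=
  ∃ φ : H →* G, (∀ t, φ (h t) = g t) ∧
    φ.range = Subgroup.closure (Set.range g)

/-- The sggi `⟨h 0, ..., h (k-1)⟩` is isomorphic to the sggi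
`⟨g 0, ..., g (k-1)⟩` via a map sending each `h t` to `g t`: there is an
injective homomorphism on the subgroup generated by the `h t` sending each `h t`
to `g t` (its range is then automatically the subgroup generated by the `g t`). -/
def SggiIsoVia {H G : Type*} [Group H] [Group G] {k : ℕ}
    (h : Fin k → H) (g : Fin k → G) : Prop :=
  ∃ φ : ↥(Subgroup.closure (Set.range h)) →* G,
    Function.Injective φ ∧
    ∀ t, φ ⟨h t, Subgroup.subset_closure (Set.mem_range_self t)⟩ = g t

/-- A group bundled with its carrier. -/
structure BundledGroup where
  carrier : Type
  [grp : Group carrier]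

attribute [instance] BundledGroup.grp

/-!
If an endomorphism fixes the generators in `J` and kills the others, it retracts the group onto
`⟨J⟩` and maps `⟨I⟩` into `⟨I ∩ J⟩`, so that `⟨I⟩ ∩ ⟨J⟩ = ⟨I ∩ J⟩`. Any family `a` in a group `A`
lifts to a family with such endomorphisms: in the power of `A` indexed by the sets of indices, let
the `i`-th element be `a i` in the coordinates `I` containing `i` and `1` elsewhere; reading
coordinate `I ∩ J` in place of `I` fixes it if `i ∈ J` and kills it otherwise. The coordinate of
the full set recovers `a`. Lifting `(g i, -1)` in `G × {±1}` makes every generator have order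
exactly `2`.
-/

universe u

/-- The intersection condition on a family of group elements, as in `IsStringCGroup` but for an
arbitrary index type and without asking that the family generates the group. -/
def IntersectionCondition {ι H : Type*} [Group H] (h : ι → H) : Prop :=
  ∀ I J : Set ι,
    Subgroup.closure (h '' I) ⊓ Subgroup.closure (h '' J) = Subgroup.closure (h '' (I ∩ J))

theorem closure_image_inf_closure_image_of_retraction {ι H : Type*} [Group H] {h : ι → H}
    {I J : Set ι} (r : H →* H) (fixes : ∀ i ∈ J, r (h i) = h i)
    (kills : ∀ i ∈ I \ J, r (h i) = 1) :
    Subgroup.closure (h '' I) ⊓ Subgroup.closure (h '' J) =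
      Subgroup.closure (h '' (I ∩ J)) := by
  refine le_antisymm ?_ (le_inf (Subgroup.closure_mono (Set.image_mono Set.inter_subset_left))
    (Subgroup.closure_mono (Set.image_mono Set.inter_subset_right)))
  have fixes_closure : Subgroup.closure (h '' J) ≤ r.eqLocus (MonoidHom.id H) :=
    (Subgroup.closure_le _).2 (Set.forall_mem_image.2 fixes)
  have maps_closure : Subgroup.closure (h '' I) ≤ (Subgroup.closure (h '' (I ∩ J))).comap r := by
    refine (Subgroup.closure_le _).2 (Set.forall_mem_image.2 fun i hiI => ?_)
    rw [SetLike.mem_coe, Subgroup.mem_comap]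
    by_cases hiJ : i ∈ J
    · rw [fixes i hiJ]
      exact Subgroup.subset_closure (Set.mem_image_of_mem h ⟨hiI, hiJ⟩)
    · rw [kills i ⟨hiI, hiJ⟩]
      exact one_mem _
  rintro x ⟨hxI, hxJ⟩
  have hx : r x = x := fixes_closure hxJ
  exact hx ▸ maps_closure hxI

theorem IntersectionCondition.of_comp_injective {ι H K : Type*} [Group H] [Group K] {h : ι → H}
    (f : H →* K) (hf : Function.Injective f) (hfh : IntersectionCondition (f ∘ h)) :
    IntersectionCondition h := by
  intro I J
  apply Subgroup.map_injective hf
  simpa only [Subgroup.map_inf _ _ f hf, MonoidHom.map_closure, ← Set.image_comp] using hfh I J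

theorem surjective_of_closure_range_eq_top {ι H K : Type*} [Group H] [Group K] {h : ι → H}
    {k : ι → K} (hk : Subgroup.closure (Set.range k) = ⊤) (f : H →* K)
    (hf : ∀ i, f (h i) = k i) : Function.Surjective f := by
  rw [← MonoidHom.range_eq_top, eq_top_iff, ← hk, Subgroup.closure_le]
  exact Set.range_subset_iff.2 fun i => ⟨h i, hf i⟩

/-- A family of group elements, regarded as a family in the subgroup it generates. -/
def toClosure {ι H : Type*} [Group H] (h : ι → H) (i : ι) : Subgroup.closure (Set.range h) :=
  ⟨h i, Subgroup.subset_closure (Set.mem_range_self i)⟩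

theorem closure_range_toClosure {ι H : Type*} [Group H] (h : ι → H) :
    Subgroup.closure (Set.range (toClosure h)) = ⊤ := by
  apply Subgroup.map_injective (Subgroup.closure (Set.range h)).subtype_injective
  rw [MonoidHom.map_closure, ← Set.range_comp, ← MonoidHom.range_eq_map, Subgroup.range_subtype]
  rfl

theorem isStringCGroup_toClosure {H : Type*} [Group H] {n : ℕ} {h : Fin n → H}
    (order_two : ∀ i, orderOf (h i) = 2)
    (string : ∀ i j : Fin n, 1 < |(i : ℤ) - (j : ℤ)| → (h i * h j) ^ 2 = 1)
    (inter : IntersectionCondition h) : IsStringCGroup (toClosure h) := by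
  have orderOf_toClosure (i : Fin n) : orderOf (toClosure h i) = 2 :=
    (Subgroup.orderOf_coe _).symm.trans (order_two i)
  have isSggi_toClosure : IsSggi (toClosure h) :=
    ⟨closure_range_toClosure h, fun i => orderOf_dvd_iff_pow_eq_one.1 (orderOf_toClosure i).dvd,
      fun i j hij => Subtype.ext (string i j hij)⟩
  exact ⟨isSggi_toClosure, orderOf_toClosure,
    IntersectionCondition.of_comp_injective _ (Subgroup.subtype_injective _) inter⟩

section SubsetLift

variable {ι A : Type*} [Monoid A]

/-- The lift of a family `a` in `A` to the power of `A` indexed by the subsets of `ι`: its `i`-th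
element is `a i` in the coordinates `I` with `i ∈ I`, and `1` in the others. -/
noncomputable def subsetLift (a : ι → A) (i : ι) : Set ι → A :=
  Set.mulIndicator {I | i ∈ I} (Function.const _ (a i))

theorem subsetLift_apply_of_mem (a : ι → A) {i : ι} {I : Set ι} (hi : i ∈ I) :
    subsetLift a i I = a i :=
  Set.mulIndicator_of_mem (s := {I | i ∈ I}) hi _

theorem subsetLift_apply_of_notMem (a : ι → A) {i : ι} {I : Set ι} (hi : i ∉ I) :
    subsetLift a i I = 1 :=
  Set.mulIndicator_of_notMem (s := {I | i ∈ I}) hi _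

theorem subsetLift_pow_eq_one_iff (a : ι → A) (i : ι) (m : ℕ) :
    subsetLift a i ^ m = 1 ↔ a i ^ m = 1 := by
  constructor
  · intro h
    simpa only [Pi.pow_apply, subsetLift_apply_of_mem a (Set.mem_univ i), Pi.one_apply]
      using congrFun h Set.univ
  · intro h
    funext I
    by_cases hi : i ∈ I
    · simpa only [Pi.pow_apply, subsetLift_apply_of_mem a hi, Pi.one_apply] using h
    · simp only [Pi.pow_apply, subsetLift_apply_of_notMem a hi, one_pow, Pi.one_apply]

theorem orderOf_subsetLift (a : ι → A) (i : ι) : orderOf (subsetLift a i) = orderOf (a i) :=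
  orderOf_eq_orderOf_iff.2 (subsetLift_pow_eq_one_iff a i)

theorem subsetLift_mul_pow_eq_one {a : ι → A} {i j : ι} {m : ℕ} (hi : a i ^ m = 1)
    (hj : a j ^ m = 1) (hij : (a i * a j) ^ m = 1) :
    (subsetLift a i * subsetLift a j) ^ m = 1 := by
  funext I
  by_cases hiI : i ∈ I <;> by_cases hjI : j ∈ I <;>
    simp [subsetLift_apply_of_mem, subsetLift_apply_of_notMem, hiI, hjI, hi, hj, hij]

/-- The endomorphism of the power of `A` indexed by the subsets of `ι` that reads coordinate
`I ∩ J` in place of `I`. -/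
def restrictSubset (J : Set ι) : (Set ι → A) →* (Set ι → A) :=
  MonoidHom.pi fun I => Pi.evalMonoidHom (fun _ : Set ι => A) (I ∩ J)

theorem restrictSubset_apply (J : Set ι) (x : Set ι → A) (I : Set ι) :
    restrictSubset J x I = x (I ∩ J) :=
  rfl

theorem restrictSubset_subsetLift_of_mem (a : ι → A) {i : ι} {J : Set ι} (hi : i ∈ J) :
    restrictSubset J (subsetLift a i) = subsetLift a i := by
  funext I
  rw [restrictSubset_apply]
  by_cases hiI : i ∈ I
  · rw [subsetLift_apply_of_mem a (Set.mem_inter hiI hi), subsetLift_apply_of_mem a hiI]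
  · rw [subsetLift_apply_of_notMem a fun h => hiI h.1, subsetLift_apply_of_notMem a hiI]

theorem restrictSubset_subsetLift_of_notMem (a : ι → A) {i : ι} {J : Set ι} (hi : i ∉ J) :
    restrictSubset J (subsetLift a i) = 1 :=
  funext fun _ => subsetLift_apply_of_notMem a fun h => hi h.2

end SubsetLift

theorem intersectionCondition_subsetLift {ι A : Type*} [Group A] (a : ι → A) :
    IntersectionCondition (subsetLift a) :=
  fun _ J => closure_image_inf_closure_image_of_retraction (restrictSubset J)
    (fun _ hi => restrictSubset_subsetLift_of_mem a hi)
    (fun _ hi => restrictSubset_subsetLift_of_notMem a hi.2)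

theorem orderOf_prodMk_neg_one {M : Type*} [Monoid M] {x : M} (hx : x ^ 2 = 1) :
    orderOf (x, (-1 : ℤˣ)) = 2 := by
  have neg_one_ne_one : (-1 : ℤˣ) ≠ 1 := by decide
  exact orderOf_eq_prime (Prod.ext hx (Int.units_sq (-1)))
    fun h => neg_one_ne_one (congrArg Prod.snd h)

theorem finite_sggi_has_finite_stringCGroup_cover_general {n : ℕ} {G : Type u} [Group G]
    (g : Fin n → G) (hG : IsSggi g) :
    ∃ (H : Type u) (_ : Group H) (h : Fin n → H),
      (Finite G → Finite H) ∧ IsStringCGroup h ∧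
      ∃ φ : H →* G, Function.Surjective φ ∧ ∀ i, φ (h i) = g i := by
  obtain ⟨hgen, hsq, hstring⟩ := hG
  let a (i : Fin n) : G × ℤˣ := (g i, -1)
  have order_two (i : Fin n) : orderOf (a i) = 2 := orderOf_prodMk_neg_one (hsq i)
  have sq_eq_one (i : Fin n) : a i ^ 2 = 1 := orderOf_dvd_iff_pow_eq_one.1 (order_two i).dvd
  let S := Subgroup.closure (Set.range (subsetLift a))
  let φ : S →* G :=
    ((MonoidHom.fst G ℤˣ).comp (Pi.evalMonoidHom _ Set.univ)).comp S.subtype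
  have hφ (i : Fin n) : φ (toClosure (subsetLift a) i) = g i :=
    congrArg Prod.fst (subsetLift_apply_of_mem a (Set.mem_univ i))
  refine ⟨S, inferInstance, toClosure (subsetLift a), fun _ => inferInstance, ?_,
    φ, surjective_of_closure_range_eq_top hgen φ hφ, hφ⟩
  refine isStringCGroup_toClosure (fun i => (orderOf_subsetLift a i).trans (order_two i))
    (fun i j hij => ?_) (intersectionCondition_subsetLift a)
  have mul_sq_eq_one : (a i * a j) ^ 2 = 1 := Prod.ext (hstring i j hij) (Int.units_sq _)
  exact subsetLift_mul_pow_eq_one (sq_eq_one i) (sq_eq_one j) mul_sq_eq_one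

/-- **Every finite sggi is covered by a finite string C-group.** -/
theorem finite_sggi_has_finite_stringCGroup_cover {n : ℕ} {G : Type} [Group G]
    [Finite G] (g : Fin n → G) (hG : IsSggi g) :
    ∃ (G' : BundledGroup) (g' : Fin n → G'.carrier),
      Finite G'.carrier ∧ IsStringCGroup g' ∧
      ∃ φ : G'.carrier →* G, Function.Surjective φ ∧ ∀ i, φ (g' i) = g i := by
  obtain ⟨H, _, h, hfin, hH, hφ⟩ := finite_sggi_has_finite_stringCGroup_cover_general g hG
  exact ⟨⟨H⟩, h, hfin inferInstance, hH, hφ⟩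
end

section
/- Every finite abstract n-polytope Q is covered by a finite regular abstract n-polytope R. That is, there exists a finite abstract n-polytope R whose automorphism group acts transitively on the set of flags of R, together with a covering η : R → Q. -/
/-- Two flags are `j`-adjacent (w.r.t. the rank function `rk`): they are distinct
and agree in every face whose rank is different from `j`. -/
def IsPolytopeAdj {P : Type*} [PartialOrder P] (rk : P → ℤ) (j : ℤ) (c d : Flag P) : Prop :=
  c ≠ d ∧ ∀ z : P, rk z ≠ j → (z ∈ c ↔ z ∈ d)

/-- `P`, with strictly monotone rank function `rk` onto `{-1, 0, ..., n}`, is an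
abstract polytope of rank `n`: it has a least and a greatest face, satisfies the
diamond condition and is strongly flag-connected. -/
structure IsAbstractPolytope {P : Type*} [PartialOrder P] (n : ℤ) (rk : P → ℤ) : Prop where
  neg_one_le : -1 ≤ n
  strictMono : ∀ {F G : P}, F < G → rk F < rk G
  rank_range : Set.range rk = Set.Icc (-1 : ℤ) n
  exists_bot : ∃ F₀ : P, ∀ F, F₀ ≤ F
  exists_top : ∃ Fn : P, ∀ F, F ≤ Fn
  diamond : ∀ F G : P, F < G → rk G = rk F + 2 →
    ∃ H₁ H₂ : P, H₁ ≠ H₂ ∧ ∀ H : P, (F < H ∧ H < G) ↔ (H = H₁ ∨ H = H₂)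
  strongly_connected : ∀ F G : P, F ≤ G →
    ∀ c d : Flag ↥(Set.Icc F G),
      Relation.ReflTransGen
        (fun c' d' => ∃ j : ℤ, IsPolytopeAdj (fun H => rk H.val) j c' d') c d

/-- A covering of polytopes: an order- and rank-preserving map sending flags to
flags and sending `j`-adjacent pairs of flags to `j`-adjacent pairs of flags. -/
def IsPolytopeCovering {R Q : Type*} [PartialOrder R] [PartialOrder Q]
    (rkR : R → ℤ) (rkQ : Q → ℤ) (η : R → Q) : Prop :=
  Monotone η ∧ (∀ F : R, rkQ (η F) = rkR F) ∧
  (∀ c : Flag R, ∃ c' : Flag Q, η '' ↑c = ↑c') ∧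
  (∀ (j : ℤ) (c d : Flag R) (c' d' : Flag Q), η '' ↑c = ↑c' → η '' ↑d = ↑d' →
    IsPolytopeAdj rkR j c d → IsPolytopeAdj rkQ j c' d')

/-- A polytope is regular if its automorphism group (order-preserving bijections)
acts transitively on the set of flags. -/
def IsRegularPolytope {P : Type*} [PartialOrder P] : Prop :=
  ∀ c d : Flag P, ∃ e : P ≃o P, e '' (↑c : Set P) = (↑d : Set P)

/-- An abstract polytope of rank `n`, bundled with its carrier. -/
structure BundledPolytope (n : ℤ) where
  carrier : Type
  [po : PartialOrder carrier]
  rk : carrier → ℤ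
  isPolytope : IsAbstractPolytope n rk

attribute [instance] BundledPolytope.po

/-!
For each proper rank `i`, exchanging every flag of `Q` with its `i`-adjacent flag is an involution,
and two such involutions commute when their ranks are not consecutive. The monodromy group they
generate acts on the flags of `Q`, but it may fail the intersection property that would make it the
automorphism group of a regular polytope. For every set `S` of ranks, replacing the involutions of
rank outside `S` by the identity gives another family with the same relations. In the mix of all
these families, the subgroup of their product generated diagonally, deleting the generators outside
a set `J` is a retraction onto the subgroup generated by `J`; applied to an element of
`⟨I⟩ ∩ ⟨J⟩`, it fixes the element and lands in `⟨I ∩ J⟩`. So the mix is a string C-group.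

The cosets of the maximal parabolic subgroups of a string C-group form a regular polytope whose
flags correspond to the group elements, right multiplication by the `i`-th generator being
`i`-adjacency. Letting the mix act on a base flag of `Q` through its untruncated factor turns these
flags into flags of `Q`, compatibly with adjacency, and this is the covering.
-/

universe u

section Chain

variable {P : Type*}

lemma isMaxChain_of_strictMono {α : Type*} [PartialOrder P] [Preorder α] {rk : P → α}
    (hrk : StrictMono rk) {C : Set P} (hC : IsChain (· ≤ ·) C) (hsurj : ∀ F, ∃ G ∈ C, rk G = rk F) :
    IsMaxChain (· ≤ ·) C := by
  refine ⟨hC, fun D hD hCD => hCD.antisymm fun F hF => ?_⟩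
  obtain ⟨G, hG, hGF⟩ := hsurj F
  have hnlt : ¬ G < F ∧ ¬ F < G := ⟨fun hlt => (hrk hlt).ne hGF, fun hlt => (hrk hlt).ne' hGF⟩
  rcases hD.total hF (hCD hG) with hle | hle
  · exact eq_of_le_of_not_lt hle hnlt.2 ▸ hG
  · exact eq_of_le_of_not_lt hle hnlt.1 ▸ hG

variable [Preorder P] {F G : P}

/-- The flag induced by a flag `c` on the section between two of its members. -/
def sectionFlag (c : Flag P) (hF : F ∈ c) (hG : G ∈ c) : Flag (Set.Icc F G) :=
  Flag.ofIsMaxChain {H | H.1 ∈ c} <| by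
    refine ⟨fun H hH K hK _ => c.le_or_le hH hK, fun D hD hcD => hcD.antisymm fun K hK => ?_⟩
    refine Flag.mem_iff_forall_le_or_ge.2 fun H hH => ?_
    rcases c.le_or_le hF hH with hFH | hHF
    · rcases c.le_or_le hH hG with hHG | hGH
      · exact hD.total hK (hcD (show (⟨H, hFH, hHG⟩ : Set.Icc F G) ∈ _ from hH))
      · exact Or.inl (K.2.2.trans hGH)
    · exact Or.inr (hHF.trans K.2.1)

@[simp]
lemma mem_sectionFlag {c : Flag P} {hF : F ∈ c} {hG : G ∈ c} {H : Set.Icc F G} :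
    H ∈ sectionFlag c hF hG ↔ H.1 ∈ c := Iff.rfl

lemma exists_sectionFlag_eq (hFG : F ≤ G) (c : Flag (Set.Icc F G)) :
    ∃ (d : Flag P) (hF : F ∈ d) (hG : G ∈ d), sectionFlag d hF hG = c := by
  have hchain : IsChain (· ≤ ·) (insert F (insert G (Subtype.val '' (c : Set (Set.Icc F G))))) := by
    refine (((Subtype.mono_coe _).isChain_image c.chain_le).insert ?_).insert ?_
    · rintro _ ⟨H, -, rfl⟩ -
      exact Or.inr H.2.2
    · rintro _ (rfl | ⟨H, -, rfl⟩) -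
      exacts [Or.inl hFG, Or.inl H.2.1]
  obtain ⟨d, hd⟩ := hchain.exists_subset_flag
  refine ⟨d, hd (by simp), hd (by simp), (Flag.ext (c.max_chain' (Flag.chain_le _) ?_)).symm⟩
  exact fun H hH => hd (Or.inr (Or.inr ⟨H, hH, rfl⟩))

end Chain

lemma IsPolytopeAdj.exists_mem_rank_eq {P : Type*} [PartialOrder P] {rk : P → ℤ} {j r : ℤ}
    {c d : Flag P} (hcd : IsPolytopeAdj rk j c d) (hc : ∃ F ∈ c, rk F = r) :
    ∃ F ∈ d, rk F = r := by
  obtain ⟨F, hF, rfl⟩ := hc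
  by_cases hj : rk F = j
  · by_contra! hd
    refine hcd.1 (Flag.ext (d.max_chain' c.chain_le fun G hG => ?_)).symm
    exact (hcd.2 G (hj ▸ hd G hG)).2 hG
  · exact ⟨F, (hcd.2 F hj).1 hF, rfl⟩

namespace IsAbstractPolytope

variable {Q : Type*} [PartialOrder Q] {rk : Q → ℤ}

lemma rank_mem_Icc {n : ℤ} (hQ : IsAbstractPolytope n rk) (F : Q) : rk F ∈ Set.Icc (-1) n :=
  hQ.rank_range ▸ Set.mem_range_self F

lemma exists_mem_flag_rank_eq {n : ℤ} (hQ : IsAbstractPolytope n rk) (c : Flag Q)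
    {r : ℤ} (hr : r ∈ Set.Icc (-1) n) : ∃ F ∈ c, rk F = r := by
  obtain ⟨F, rfl⟩ : r ∈ Set.range rk := hQ.rank_range ▸ hr
  obtain ⟨B, hB⟩ := hQ.exists_bot
  obtain ⟨T, hT⟩ := hQ.exists_top
  have hBmem (d : Flag Q) : B ∈ d := Flag.mem_iff_forall_le_or_ge.2 fun G _ => Or.inl (hB G)
  have hTmem (d : Flag Q) : T ∈ d := Flag.mem_iff_forall_le_or_ge.2 fun G _ => Or.inr (hT G)
  obtain ⟨d, hd⟩ := Flag.exists_mem F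
  suffices ∃ G ∈ sectionFlag c (hBmem c) (hTmem c), rk G.1 = rk F by
    obtain ⟨G, hG, hGF⟩ := this
    exact ⟨G, hG, hGF⟩
  generalize sectionFlag c (hBmem c) (hTmem c) = c'
  induction hQ.strongly_connected B T (hB T) (sectionFlag d (hBmem d) (hTmem d)) c' with
  | refl => exact ⟨⟨F, hB F, hT F⟩, hd, rfl⟩
  | tail _ hadj ih => exact hadj.choose_spec.exists_mem_rank_eq ih

variable {n : ℕ}

lemma nonempty_orderEmbedding (hQ : IsAbstractPolytope (n : ℤ) rk) :
    Nonempty (Fin (n + 2) ↪o Q) := by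
  obtain ⟨c⟩ : Nonempty (Flag Q) := inferInstance
  have hmem (s : Fin (n + 2)) : ∃ F ∈ c, rk F = (s : ℤ) - 1 :=
    hQ.exists_mem_flag_rank_eq c ⟨by omega, by omega⟩
  choose f hfc hf using hmem
  have hlt {s t : Fin (n + 2)} (hst : s < t) : rk (f s) < rk (f t) := by
    rw [hf, hf]
    omega
  refine ⟨OrderEmbedding.ofStrictMono f fun s t hst => ?_⟩
  rcases c.le_or_le (hfc s) (hfc t) with hle | hle
  · exact hle.lt_of_ne fun h => (hlt hst).ne (congrArg rk h)
  · rcases hle.lt_or_eq with h | h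
    exacts [absurd (hQ.strictMono h) (hlt hst).not_gt, absurd (congrArg rk h) (hlt hst).ne']

lemma rank_apply (hQ : IsAbstractPolytope (n : ℤ) rk) (f : Fin (n + 2) ↪o Q) (s : Fin (n + 2)) :
    rk (f s) = s - 1 := by
  have hlt (i : Fin (n + 1)) : rk (f i.castSucc) < rk (f i.succ) :=
    hQ.strictMono (f.strictMono i.castSucc_lt_succ)
  apply le_antisymm
  · induction s using Fin.reverseInduction with
    | last => simpa using (hQ.rank_mem_Icc _).2
    | cast i ih =>
      have := hlt i
      simp only [Fin.val_succ, Fin.val_castSucc] at this ih ⊢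
      omega
  · induction s using Fin.induction with
    | zero => simpa using (hQ.rank_mem_Icc _).1
    | succ i ih =>
      have := hlt i
      simp only [Fin.val_succ, Fin.val_castSucc] at this ih ⊢
      omega

lemma isMaxChain_range (hQ : IsAbstractPolytope (n : ℤ) rk) (f : Fin (n + 2) ↪o Q) :
    IsMaxChain (· ≤ ·) (Set.range f) := by
  refine isMaxChain_of_strictMono (fun _ _ => hQ.strictMono) f.monotone.isChain_range fun F => ?_
  obtain ⟨h₁, h₂⟩ := hQ.rank_mem_Icc F
  refine ⟨f ⟨(rk F + 1).toNat, by omega⟩, Set.mem_range_self _, ?_⟩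
  rw [hQ.rank_apply]
  dsimp only
  omega

end IsAbstractPolytope

lemma exists_mul_of_mem_closure_union {Γ : Type*} [Group Γ] {A B : Set Γ}
    (hAB : ∀ a ∈ A, ∀ b ∈ B, Commute a b) {g : Γ} (hg : g ∈ Subgroup.closure (A ∪ B)) :
    ∃ x ∈ Subgroup.closure A, ∃ y ∈ Subgroup.closure B, x * y = g := by
  have hle : Subgroup.closure A ≤ Subgroup.centralizer (Subgroup.closure B) := by
    rw [Subgroup.centralizer_closure, Subgroup.closure_le]
    exact fun a ha b hb => (hAB a ha b hb).symm
  have hcomm (x : Subgroup.closure A) (y : Subgroup.closure B) : Commute (x : Γ) y :=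
    (hle x.2 y y.2).symm
  rw [Subgroup.closure_union, ← (Subgroup.closure A).range_subtype,
    ← (Subgroup.closure B).range_subtype, ← MonoidHom.noncommCoprod_range _ _ hcomm] at hg
  obtain ⟨⟨x, y⟩, rfl⟩ := hg
  exact ⟨x, x.2, y, y.2, rfl⟩

/-- The position `i + 1` of the face of rank `i` among the faces of ranks `-1, …, n` of a flag. -/
def properLevel {n : ℕ} (i : Fin n) : Fin (n + 2) := i.succ.castSucc

@[simp]
lemma val_properLevel {n : ℕ} (i : Fin n) : (properLevel i : ℕ) = i + 1 := rfl

lemma properLevel_injective {n : ℕ} : Function.Injective (properLevel (n := n)) :=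
  (Fin.castSucc_injective _).comp (Fin.succ_injective _)

/-- A string C-group of rank `n`: the group `Γ` generated by involutions `gen 0, …, gen (n - 1)`,
non-neighbouring ones of which commute, subject to the intersection property. -/
structure StringCGroup (n : ℕ) (Γ : Type*) [Group Γ] where
  gen : Fin n → Γ
  gen_mul_self : ∀ i, gen i * gen i = 1
  gen_ne_one : ∀ i, gen i ≠ 1
  commute_gen : ∀ i j : Fin n, (i : ℕ) + 1 < j → Commute (gen i) (gen j)
  closure_range_gen : Subgroup.closure (Set.range gen) = ⊤
  closure_inf_closure_le : ∀ I J : Set (Fin n),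
    Subgroup.closure (gen '' I) ⊓ Subgroup.closure (gen '' J) ≤ Subgroup.closure (gen '' (I ∩ J))

namespace StringCGroup

variable {n : ℕ} {Γ : Type*} [Group Γ] (P : StringCGroup n Γ)

/-- The parabolic subgroup generated by the `gen i` whose level `i + 1` lies in `S`. Indexing by
sets of levels lets it record where two flags of the coset poset may differ. -/
def parabolic (S : Set (Fin (n + 2))) : Subgroup Γ :=
  Subgroup.closure (P.gen '' (properLevel ⁻¹' S))

variable {P}

lemma gen_mem_parabolic {S : Set (Fin (n + 2))} {i : Fin n} (hi : properLevel i ∈ S) :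
    P.gen i ∈ P.parabolic S :=
  Subgroup.subset_closure ⟨i, hi, rfl⟩

lemma parabolic_mono {S T : Set (Fin (n + 2))} (hST : S ⊆ T) : P.parabolic S ≤ P.parabolic T :=
  Subgroup.closure_mono (Set.image_mono (Set.preimage_mono hST))

lemma parabolic_eq_top {S : Set (Fin (n + 2))} (hS : ∀ i, properLevel i ∈ S) :
    P.parabolic S = ⊤ := by
  rw [eq_top_iff, ← P.closure_range_gen, Subgroup.closure_le]
  rintro _ ⟨i, rfl⟩
  exact gen_mem_parabolic (hS i)

lemma mem_parabolic_inter {S T : Set (Fin (n + 2))} {g : Γ} (hS : g ∈ P.parabolic S)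
    (hT : g ∈ P.parabolic T) : g ∈ P.parabolic (S ∩ T) :=
  P.closure_inf_closure_le _ _ ⟨hS, hT⟩

lemma mem_parabolic_compl {T : Set (Fin (n + 2))} {g : Γ} (hg : ∀ s ∈ T, g ∈ P.parabolic {s}ᶜ) :
    g ∈ P.parabolic Tᶜ := by
  induction T, T.toFinite using Set.Finite.induction_on with
  | empty => simp [parabolic_eq_top]
  | @insert s T _ _ ih =>
    rw [Set.insert_eq, Set.compl_union]
    exact mem_parabolic_inter (hg s (by simp)) (ih fun t ht => hg t (by simp [ht]))

lemma gen_inv (i : Fin n) : (P.gen i)⁻¹ = P.gen i :=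
  inv_eq_of_mul_eq_one_left (P.gen_mul_self i)

@[elab_as_elim]
lemma parabolic_induction {S : Set (Fin (n + 2))} {p : ∀ g, g ∈ P.parabolic S → Prop}
    (one : p 1 (one_mem _))
    (mul_gen : ∀ (g) (i) (hg : g ∈ P.parabolic S) (hi : properLevel i ∈ S), p g hg →
      p (g * P.gen i) (mul_mem hg (gen_mem_parabolic hi)))
    {g : Γ} (hg : g ∈ P.parabolic S) : p g hg := by
  induction hg using Subgroup.closure_induction_right with
  | one => exact one
  | mul_right x hx y hy ih =>
    obtain ⟨i, hi, rfl⟩ := hy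
    exact mul_gen x i hx hi ih
  | mul_inv_cancel x hx y hy ih =>
    obtain ⟨i, hi, rfl⟩ := hy
    simp only [gen_inv]
    exact mul_gen x i hx hi ih

lemma eq_one_or_eq_gen_of_mem_parabolic {S : Set (Fin (n + 2))} (hS : S.Subsingleton) {g : Γ}
    (hg : g ∈ P.parabolic S) : g = 1 ∨ ∃ i, properLevel i ∈ S ∧ g = P.gen i := by
  induction hg using parabolic_induction with
  | one => exact Or.inl rfl
  | mul_gen x i _ hi ih =>
    rcases ih with rfl | ⟨j, hj, rfl⟩
    · exact Or.inr ⟨i, hi, one_mul _⟩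
    · exact Or.inl (properLevel_injective (hS hj hi) ▸ P.gen_mul_self j)

lemma gen_notMem_parabolic (i : Fin n) : P.gen i ∉ P.parabolic {properLevel i}ᶜ := by
  intro hi
  have := mem_parabolic_inter (gen_mem_parabolic (S := {properLevel i}) rfl) hi
  simp only [parabolic, Set.inter_compl_self, Set.preimage_empty, Set.image_empty,
    Subgroup.closure_empty, Subgroup.mem_bot] at this
  exact P.gen_ne_one i this

lemma exists_mul_of_mem_parabolic_compl {s : Fin (n + 2)} {g : Γ} (hg : g ∈ P.parabolic {s}ᶜ) :
    ∃ x ∈ P.parabolic (Set.Ioi s), ∃ y ∈ P.parabolic (Set.Iio s), x * y = g := by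
  refine exists_mul_of_mem_closure_union ?_ (by
    rwa [← Set.image_union, ← Set.preimage_union, Set.union_comm, Set.Iio_union_Ioi])
  rintro _ ⟨j, hj, rfl⟩ _ ⟨i, hi, rfl⟩
  simp only [Set.mem_preimage, Set.mem_Ioi, Set.mem_Iio, Fin.lt_def, val_properLevel] at hi hj
  exact (P.commute_gen i j (by omega)).symm

variable (P)

/-- The faces of the coset poset of `P`: at level `s`, which is rank `s - 1`, the left cosets of
the parabolic subgroup generated by all generators but the one of that level. -/
def Face : Type _ := Σ s : Fin (n + 2), Γ ⧸ P.parabolic {s}ᶜ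

instance [Finite Γ] : Finite P.Face :=
  inferInstanceAs (Finite (Σ s : Fin (n + 2), Γ ⧸ P.parabolic {s}ᶜ))

instance : MulAction Γ P.Face :=
  inferInstanceAs (MulAction Γ (Σ s : Fin (n + 2), Γ ⧸ P.parabolic {s}ᶜ))

/-- The face of level `s` through the group element `a`. -/
def face (s : Fin (n + 2)) (a : Γ) : P.Face := ⟨s, (a : Γ ⧸ P.parabolic {s}ᶜ)⟩

variable {P}

/-- The level of a face, one more than its rank. -/
def level (F : P.Face) : Fin (n + 2) := F.1

@[simp]
lemma level_face (s : Fin (n + 2)) (a : Γ) : level (P.face s a) = s := rfl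

lemma exists_face_eq (F : P.Face) : ∃ a, P.face (level F) a = F := by
  obtain ⟨s, q⟩ := F
  obtain ⟨a, rfl⟩ := QuotientGroup.mk_surjective q
  exact ⟨a, rfl⟩

lemma face_eq_face {s : Fin (n + 2)} {a b : Γ} :
    P.face s a = P.face s b ↔ a⁻¹ * b ∈ P.parabolic {s}ᶜ :=
  sigma_mk_injective.eq_iff.trans QuotientGroup.eq

lemma face_mul {S : Set (Fin (n + 2))} {s : Fin (n + 2)} (hs : s ∉ S) (a : Γ) {x : Γ}
    (hx : x ∈ P.parabolic S) : P.face s (a * x) = P.face s a := by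
  rw [eq_comm, face_eq_face, inv_mul_cancel_left]
  exact parabolic_mono (Set.subset_compl_singleton_iff.2 hs) hx

lemma face_mul_gen_eq_iff {s : Fin (n + 2)} {a : Γ} {i : Fin n} :
    P.face s (a * P.gen i) = P.face s a ↔ s ≠ properLevel i := by
  refine ⟨?_, fun hs => face_mul (S := {properLevel i}) hs a (gen_mem_parabolic rfl)⟩
  rintro h rfl
  rw [eq_comm, face_eq_face, inv_mul_cancel_left] at h
  exact gen_notMem_parabolic i h

/-- This is where the commutation of non-neighbouring generators enters. -/
lemma exists_splice {t : Fin (n + 2)} {a b : Γ} (hab : P.face t a = P.face t b) :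
    ∃ c, (∀ s ≤ t, P.face s c = P.face s a) ∧ ∀ s, t ≤ s → P.face s c = P.face s b := by
  obtain ⟨x, hx, y, hy, hxy⟩ := exists_mul_of_mem_parabolic_compl (face_eq_face.1 hab)
  refine ⟨a * x, fun s hs => face_mul hs.not_gt a hx, fun s hs => ?_⟩
  rw [← face_mul (S := Set.Iio t) hs.not_gt (a * x) hy, mul_assoc, hxy, mul_inv_cancel_left]

lemma inv_mul_mem_parabolic_of_face_eq {S : Set (Fin (n + 2))} {a b : Γ}
    (hab : ∀ s ∉ S, P.face s a = P.face s b) : a⁻¹ * b ∈ P.parabolic S := by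
  rw [← compl_compl S]
  exact mem_parabolic_compl fun s hs => face_eq_face.1 (hab s hs)

lemma exists_splice_Icc {s t : Fin (n + 2)} (hst : s ≤ t) {a b : Γ}
    (hs : P.face s a = P.face s b) (ht : P.face t a = P.face t b) :
    ∃ d ∈ P.parabolic (Set.Ioo s t), ∀ u ∈ Set.Icc s t, P.face u (a * d) = P.face u b := by
  obtain ⟨b', hb's, hb't⟩ := exists_splice hs
  obtain ⟨c, hct, hc⟩ := exists_splice ((hb't t hst).trans ht.symm)
  refine ⟨a⁻¹ * c, inv_mul_mem_parabolic_of_face_eq fun u hu => ?_, fun u hu => ?_⟩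
  · rcases le_or_gt u s with hus | hsu
    · rw [hct u (hus.trans hst), hb's u hus]
    · exact (hc u (not_lt.1 fun hut => hu ⟨hsu, hut⟩)).symm
  · rw [mul_inv_cancel_left, hct u hu.2, hb't u hu.1]

/-- Incidence of faces: two faces are comparable when, as cosets, they share a group element, and
are then ordered by level. -/
instance : PartialOrder P.Face where
  le F G := level F ≤ level G ∧ ∃ a, P.face (level F) a = F ∧ P.face (level G) a = G
  le_refl F := ⟨le_rfl, (exists_face_eq F).imp fun _ ha => ⟨ha, ha⟩⟩
  le_trans := by
    rintro F G K ⟨hFG, a, haF, haG⟩ ⟨hGK, b, hbG, hbK⟩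
    obtain ⟨c, hca, hcb⟩ := exists_splice (haG.trans hbG.symm)
    exact ⟨hFG.trans hGK, c, (hca _ hFG).trans haF, (hcb _ hGK).trans hbK⟩
  le_antisymm := by
    rintro F G ⟨hFG, a, haF, haG⟩ ⟨hGF, -⟩
    exact haF.symm.trans ((congrArg (P.face · a) (hFG.antisymm hGF)).trans haG)

lemma le_iff {F G : P.Face} :
    F ≤ G ↔ level F ≤ level G ∧ ∃ a, P.face (level F) a = F ∧ P.face (level G) a = G := Iff.rfl

lemma face_strictMono (a : Γ) : StrictMono (P.face · a) := fun _ _ hst =>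
  lt_of_le_of_ne ⟨hst.le, a, rfl, rfl⟩ fun h => hst.ne (congrArg level h)

lemma level_strictMono : StrictMono (level (P := P)) := by
  intro F G hFG
  obtain ⟨hle, a, hF, hG⟩ := le_iff.1 hFG.le
  exact hle.lt_of_ne fun h => hFG.ne (hF.symm.trans ((congrArg (P.face · a) h).trans hG))

lemma exists_face_eq_of_isChain {C : Set P.Face} (hC : IsChain (· ≤ ·) C) :
    ∃ a, ∀ F ∈ C, P.face (level F) a = F := by
  classical
  have hinj : Set.InjOn level C := fun F hF G hG h => by
    by_contra hne
    rcases hC.lt_of_le hF hG hne with hlt | hlt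
    exacts [(level_strictMono hlt).ne h, (level_strictMono hlt).ne' h]
  obtain ⟨S, rfl⟩ := (Set.toFinite (level '' C)).of_finite_image hinj |>.exists_finset_coe
  clear hinj
  revert hC
  refine Finset.induction_on_max_value level S (fun _ => ⟨1, by simp⟩) fun G S hG hmax ih hC => ?_
  obtain ⟨a, ha⟩ := ih (hC.mono (by simp))
  rcases S.eq_empty_or_nonempty with rfl | hS
  · simpa using exists_face_eq G
  obtain ⟨F, hF, hFmax⟩ := S.exists_max_image level hS
  have hFG : F ≤ G := (hC.total (by simp [hF]) (by simp)).resolve_right fun hGF =>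
    (hmax F hF).not_gt (level_strictMono (hGF.lt_of_ne (ne_of_mem_of_not_mem hF hG).symm))
  obtain ⟨hlevel, b, hbF, hbG⟩ := le_iff.1 hFG
  obtain ⟨c, hca, hcb⟩ := exists_splice ((ha F hF).trans hbF.symm)
  refine ⟨c, fun K hK => ?_⟩
  rcases Finset.mem_insert.1 (Finset.mem_coe.1 hK) with rfl | hK
  · exact (hcb _ hlevel).trans hbG
  · exact (hca _ (hFmax K hK)).trans (ha K hK)

variable (P) in
/-- The flag of the coset poset formed by the faces through a group element. -/
def flag (a : Γ) : Flag P.Face :=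
  Flag.ofIsMaxChain (Set.range (P.face · a)) <|
    isMaxChain_of_strictMono level_strictMono (face_strictMono a).monotone.isChain_range
      fun F => ⟨P.face (level F) a, Set.mem_range_self _, rfl⟩

lemma coe_flag (a : Γ) : (P.flag a : Set P.Face) = Set.range (P.face · a) := rfl

lemma mem_flag {a : Γ} {F : P.Face} : F ∈ P.flag a ↔ P.face (level F) a = F :=
  ⟨by rintro ⟨s, rfl⟩; rfl, fun h => ⟨level F, h⟩⟩

lemma exists_flag_eq (c : Flag P.Face) : ∃ a, P.flag a = c := by
  obtain ⟨a, ha⟩ := exists_face_eq_of_isChain c.chain_le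
  exact ⟨a, (Flag.ext (c.max_chain' (Flag.chain_le _) fun F hF => mem_flag.2 (ha F hF))).symm⟩

/-- The rank function of the coset poset. -/
def rank (F : P.Face) : ℤ := level F - 1

lemma isPolytopeAdj_sectionFlag {F G : P.Face} {a : Γ} {i : Fin n}
    (hi : properLevel i ∈ Set.Ioo (level F) (level G)) (hF : F ∈ P.flag a) (hG : G ∈ P.flag a)
    (hF' : F ∈ P.flag (a * P.gen i)) (hG' : G ∈ P.flag (a * P.gen i)) :
    IsPolytopeAdj (fun H : Set.Icc F G => rank H.1) i (sectionFlag (P.flag a) hF hG)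
      (sectionFlag (P.flag (a * P.gen i)) hF' hG') := by
  refine ⟨fun h => ?_, fun H hH => ?_⟩
  · have hmem : P.face (properLevel i) a ∈ Set.Icc F G := by
      rw [← mem_flag.1 hF, ← mem_flag.1 hG]
      exact ⟨(face_strictMono a hi.1).le, (face_strictMono a hi.2).le⟩
    have hflag : (⟨_, hmem⟩ : Set.Icc F G) ∈ sectionFlag (P.flag a) hF hG := mem_flag.2 rfl
    rw [h, mem_sectionFlag, mem_flag] at hflag
    exact face_mul_gen_eq_iff.1 hflag rfl
  · have hne : level H.1 ≠ properLevel i := fun h => hH (by simp [rank, h])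
    rw [mem_sectionFlag, mem_sectionFlag, mem_flag, mem_flag, face_mul_gen_eq_iff.2 hne]

lemma reflTransGen_sectionFlag {F G : P.Face} {a x : Γ}
    (hx : x ∈ P.parabolic (Set.Ioo (level F) (level G))) (hF : F ∈ P.flag a) (hG : G ∈ P.flag a)
    (hF' : F ∈ P.flag (a * x)) (hG' : G ∈ P.flag (a * x)) :
    Relation.ReflTransGen
      (fun c d => ∃ j : ℤ, IsPolytopeAdj (fun H : Set.Icc F G => rank H.1) j c d)
      (sectionFlag (P.flag a) hF hG) (sectionFlag (P.flag (a * x)) hF' hG') := by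
  induction hx using parabolic_induction with
  | one => simp only [mul_one, Relation.ReflTransGen.refl]
  | mul_gen x i _ hi ih =>
    have hmem {K : P.Face} (hK : level K ≠ properLevel i) (h : K ∈ P.flag (a * (x * P.gen i))) :
        K ∈ P.flag (a * x) := by
      rwa [mem_flag, ← mul_assoc, face_mul_gen_eq_iff.2 hK, ← mem_flag] at h
    simp only [← mul_assoc] at hF' hG' ⊢
    exact (ih (hmem hi.1.ne (by rwa [← mul_assoc])) (hmem hi.2.ne' (by rwa [← mul_assoc]))).tail
      ⟨i, isPolytopeAdj_sectionFlag hi _ _ _ _⟩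

lemma exists_mul_of_le_of_le {F G H : P.Face} {a : Γ} (hF : P.face (level F) a = F)
    (hG : P.face (level G) a = G) (hFH : F ≤ H) (hHG : H ≤ G) :
    ∃ x ∈ P.parabolic (Set.Ioo (level F) (level G)), P.face (level H) (a * x) = H := by
  obtain ⟨-, b, hbF, hbH⟩ := le_iff.1 hFH
  obtain ⟨-, c, hcH, hcG⟩ := le_iff.1 hHG
  obtain ⟨d, hdb, hdc⟩ := exists_splice (hbH.trans hcH.symm)
  obtain ⟨x, hx, hxd⟩ := exists_splice_Icc (hFH.trans hHG).1
    (hF.trans ((hdb _ hFH.1).trans hbF).symm) (hG.trans ((hdc _ hHG.1).trans hcG).symm)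
  exact ⟨x, hx, (hxd _ ⟨hFH.1, hHG.1⟩).trans ((hdb _ le_rfl).trans hbH)⟩

lemma exists_between {F G : P.Face} (hFG : F < G) (hrank : rank G = rank F + 2) :
    ∃ H₁ H₂ : P.Face, H₁ ≠ H₂ ∧ ∀ H, F < H ∧ H < G ↔ H = H₁ ∨ H = H₂ := by
  obtain ⟨-, a, hF, hG⟩ := le_iff.1 hFG.le
  simp only [rank] at hrank
  obtain ⟨i, hi⟩ : ∃ i : Fin n, (i : ℕ) = level F := ⟨⟨level F, by omega⟩, rfl⟩
  have hIoo : Set.Ioo (level F) (level G) = {properLevel i} := by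
    ext s
    simp only [Set.mem_Ioo, Set.mem_singleton_iff, Fin.lt_def, Fin.ext_iff, val_properLevel]
    omega
  obtain ⟨hFi, hiG⟩ : properLevel i ∈ Set.Ioo (level F) (level G) := hIoo ▸ rfl
  refine ⟨P.face (properLevel i) a, P.face (properLevel i) (a * P.gen i),
    fun h => face_mul_gen_eq_iff.1 h.symm rfl, fun H => ⟨fun ⟨hFH, hHG⟩ => ?_, ?_⟩⟩
  · have hHi : level H = properLevel i := by
      rw [← Set.mem_singleton_iff, ← hIoo]
      exact ⟨level_strictMono hFH, level_strictMono hHG⟩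
    obtain ⟨x, hx, rfl⟩ : ∃ x ∈ P.parabolic {properLevel i},
        P.face (properLevel i) (a * x) = H := by
      rw [← hIoo, ← hHi]
      exact exists_mul_of_le_of_le hF hG hFH.le hHG.le
    rcases eq_one_or_eq_gen_of_mem_parabolic Set.subsingleton_singleton hx with rfl | ⟨j, hj, rfl⟩
    · exact Or.inl (by rw [mul_one])
    · exact Or.inr (by rw [properLevel_injective hj])
  · have hF' := (face_mul_gen_eq_iff.2 hFi.ne).trans hF
    have hG' := (face_mul_gen_eq_iff.2 hiG.ne').trans hG
    rintro (rfl | rfl)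
    · exact ⟨hF.symm.trans_lt (face_strictMono a hFi), (face_strictMono a hiG).trans_eq hG⟩
    · exact ⟨hF'.symm.trans_lt (face_strictMono _ hFi), (face_strictMono _ hiG).trans_eq hG'⟩

lemma reflTransGen_isPolytopeAdj {F G : P.Face} (hFG : F ≤ G) (c d : Flag (Set.Icc F G)) :
    Relation.ReflTransGen
      (fun c d => ∃ j : ℤ, IsPolytopeAdj (fun H : Set.Icc F G => rank H.1) j c d) c d := by
  obtain ⟨c, hFc, hGc, rfl⟩ := exists_sectionFlag_eq hFG c
  obtain ⟨d, hFd, hGd, rfl⟩ := exists_sectionFlag_eq hFG d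
  obtain ⟨a, rfl⟩ := exists_flag_eq c
  obtain ⟨b, rfl⟩ := exists_flag_eq d
  have hface {K : P.Face} (ha : K ∈ P.flag a) (hb : K ∈ P.flag b) :
      P.face (level K) a = P.face (level K) b := (mem_flag.1 ha).trans (mem_flag.1 hb).symm
  obtain ⟨x, hx, hxb⟩ := exists_splice_Icc hFG.1 (hface hFc hFd) (hface hGc hGd)
  have hmem {K : P.Face} (hK : K ∈ Set.Icc F G) : K ∈ P.flag (a * x) ↔ K ∈ P.flag b := by
    rw [mem_flag, mem_flag, hxb _ ⟨hK.1.1, hK.2.1⟩]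
  have hsection : sectionFlag (P.flag b) hFd hGd = sectionFlag (P.flag (a * x))
      ((hmem ⟨le_rfl, hFG⟩).2 hFd) ((hmem ⟨hFG, le_rfl⟩).2 hGd) :=
    Flag.ext (Set.ext fun H => (hmem H.2).symm)
  rw [hsection]
  exact reflTransGen_sectionFlag hx _ _ _ _

lemma face_eq_face_of_forall_ne {s : Fin (n + 2)} (hs : ∀ i, properLevel i ≠ s) (a b : Γ) :
    P.face s a = P.face s b := by
  rw [face_eq_face, parabolic_eq_top hs]
  trivial

lemma face_zero_le (a : Γ) (F : P.Face) : P.face 0 a ≤ F := by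
  obtain ⟨b, hb⟩ := exists_face_eq F
  exact ⟨Fin.zero_le _, b, face_eq_face_of_forall_ne (fun i => Fin.succ_ne_zero i.castSucc) _ _, hb⟩

lemma le_face_last (a : Γ) (F : P.Face) : F ≤ P.face (Fin.last _) a := by
  obtain ⟨b, hb⟩ := exists_face_eq F
  exact ⟨Fin.le_last _, b, hb, face_eq_face_of_forall_ne (fun i => Fin.castSucc_ne_last i.succ) _ _⟩

lemma range_rank : Set.range (rank : P.Face → ℤ) = Set.Icc (-1) (n : ℤ) := by
  ext r
  refine ⟨?_, fun ⟨hr, hrn⟩ => ⟨P.face ⟨(r + 1).toNat, by omega⟩ 1, ?_⟩⟩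
  · rintro ⟨F, rfl⟩
    simp only [rank, Set.mem_Icc]
    omega
  · simp only [rank, level_face]
    omega

theorem isAbstractPolytope (P : StringCGroup n Γ) :
    IsAbstractPolytope (n : ℤ) (rank : P.Face → ℤ) where
  neg_one_le := by omega
  strictMono h := by simpa [rank] using level_strictMono h
  rank_range := range_rank
  exists_bot := ⟨P.face 0 1, face_zero_le 1⟩
  exists_top := ⟨P.face (Fin.last _) 1, le_face_last 1⟩
  diamond _ _ := exists_between
  strongly_connected _ _ := reflTransGen_isPolytopeAdj

lemma smul_mono (g : Γ) : Monotone (g • · : P.Face → P.Face) := by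
  rintro F G ⟨hFG, a, hF, hG⟩
  exact ⟨hFG, g * a, congrArg (g • ·) hF, congrArg (g • ·) hG⟩

theorem isRegularPolytope (P : StringCGroup n Γ) : IsRegularPolytope (P := P.Face) := by
  intro c d
  obtain ⟨a, rfl⟩ := exists_flag_eq c
  obtain ⟨b, rfl⟩ := exists_flag_eq d
  refine ⟨(MulAction.toPerm (b * a⁻¹)).toOrderIso (smul_mono _) (smul_mono _), ?_⟩
  rw [coe_flag, coe_flag, ← Set.range_comp]
  refine congrArg Set.range (funext fun s => ?_)
  change P.face s (b * a⁻¹ * a) = P.face s b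
  rw [inv_mul_cancel_right]

lemma exists_gen_of_isPolytopeAdj {j : ℤ} {a b : Γ}
    (hab : IsPolytopeAdj rank j (P.flag a) (P.flag b)) : ∃ i : Fin n, j = i ∧ b = a * P.gen i := by
  have hmem : a⁻¹ * b ∈ P.parabolic {s | (s : ℤ) - 1 = j} :=
    inv_mul_mem_parabolic_of_face_eq fun s hs =>
      (mem_flag.1 ((hab.2 (P.face s a) hs).1 (mem_flag.2 rfl))).symm
  have hsub : {s : Fin (n + 2) | (s : ℤ) - 1 = j}.Subsingleton := fun s hs t ht => by
    simp only [Set.mem_ofPred_eq] at hs ht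
    omega
  rcases eq_one_or_eq_gen_of_mem_parabolic hsub hmem with h | ⟨i, hi, h⟩
  · exact absurd (congrArg P.flag (inv_mul_eq_one.1 h)) hab.1
  · exact ⟨i, by simpa using hi.symm, inv_mul_eq_iff_eq_mul.1 h⟩

end StringCGroup

/-- Adjacency of flags at their proper face of rank `i`, for flags given by their increasing
enumerations. -/
def FlagAdj {Q : Type*} [PartialOrder Q] {n : ℕ} (i : Fin n) (f g : Fin (n + 2) ↪o Q) : Prop :=
  ∀ s, g s = f s ↔ s ≠ properLevel i

lemma castSucc_castSucc_lt_properLevel {n : ℕ} (i : Fin n) :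
    i.castSucc.castSucc < properLevel i :=
  Fin.castSucc_lt_castSucc_iff.2 i.castSucc_lt_succ

lemma properLevel_lt_succ_succ {n : ℕ} (i : Fin n) : properLevel i < i.succ.succ :=
  i.succ.castSucc_lt_succ

lemma apply_properLevel_mem_Ioo {Q : Type*} [Preorder Q] {n : ℕ} {f : Fin (n + 2) → Q}
    (hf : StrictMono f) (i : Fin n) :
    f (properLevel i) ∈ Set.Ioo (f i.castSucc.castSucc) (f i.succ.succ) :=
  ⟨hf (castSucc_castSucc_lt_properLevel i), hf (properLevel_lt_succ_succ i)⟩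

lemma strictMono_update_properLevel {Q : Type*} [Preorder Q] {n : ℕ} {f : Fin (n + 2) → Q}
    (hf : StrictMono f) {i : Fin n} {H : Q}
    (hH : H ∈ Set.Ioo (f i.castSucc.castSucc) (f i.succ.succ)) :
    StrictMono (Function.update f (properLevel i) H) := by
  rw [Fin.strictMono_iff_lt_succ]
  intro k
  rcases eq_or_ne k.castSucc (properLevel i) with hk | hk
  · obtain rfl := Fin.castSucc_injective _ hk
    rw [hk, Function.update_self, Function.update_of_ne (properLevel_lt_succ_succ i).ne']
    exact hH.2
  rcases eq_or_ne k.succ (properLevel i) with hk' | hk'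
  · obtain rfl : k = i.castSucc := Fin.ext (by simpa [Fin.ext_iff] using hk')
    rw [hk', Function.update_self,
      Function.update_of_ne (castSucc_castSucc_lt_properLevel i).ne]
    exact hH.1
  · rw [Function.update_of_ne hk, Function.update_of_ne hk']
    exact hf k.castSucc_lt_succ

namespace IsAbstractPolytope

variable {Q : Type*} [PartialOrder Q] {n : ℕ} {rk : Q → ℤ}

lemma exists_forall_mem_Ioo_iff (hQ : IsAbstractPolytope (n : ℤ) rk) (f : Fin (n + 2) ↪o Q)
    (i : Fin n) : ∃ K ≠ f (properLevel i), ∀ H,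
      H ∈ Set.Ioo (f i.castSucc.castSucc) (f i.succ.succ) ↔ H = f (properLevel i) ∨ H = K := by
  obtain ⟨hlt, hlt'⟩ := apply_properLevel_mem_Ioo f.strictMono i
  obtain ⟨H₁, H₂, hne, hH⟩ := hQ.diamond _ _ (hlt.trans hlt') (by
    simp only [hQ.rank_apply, Fin.val_succ, Fin.val_castSucc]
    omega)
  rcases (hH _).1 ⟨hlt, hlt'⟩ with h | h
  · exact ⟨H₂, h ▸ hne.symm, h ▸ hH⟩
  · exact ⟨H₁, h ▸ hne, fun H => (h ▸ hH H).trans or_comm⟩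

lemma exists_flagAdj (hQ : IsAbstractPolytope (n : ℤ) rk) (f : Fin (n + 2) ↪o Q)
    (i : Fin n) : ∃ g, FlagAdj i f g := by
  obtain ⟨K, hKne, hK⟩ := hQ.exists_forall_mem_Ioo_iff f i
  have hmono := strictMono_update_properLevel f.strictMono ((hK K).2 (Or.inr rfl))
  refine ⟨.ofStrictMono _ hmono, fun s => ?_⟩
  rcases eq_or_ne s (properLevel i) with rfl | hs <;> simp [*]

end IsAbstractPolytope

namespace FlagAdj

variable {Q : Type*} [PartialOrder Q] {n : ℕ} {rk : Q → ℤ} {i j : Fin n}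
  {f f' g g' : Fin (n + 2) ↪o Q}

lemma symm (h : FlagAdj i f g) : FlagAdj i g f := fun s => eq_comm.trans (h s)

lemma apply_mem_Ioo (h : FlagAdj i f g) :
    g (properLevel i) ∈ Set.Ioo (f i.castSucc.castSucc) (f i.succ.succ) := by
  rw [← (h _).2 (castSucc_castSucc_lt_properLevel i).ne,
    ← (h _).2 (properLevel_lt_succ_succ i).ne']
  exact apply_properLevel_mem_Ioo g.strictMono i

lemma apply_eq_apply (hQ : IsAbstractPolytope (n : ℤ) rk) (hfg : FlagAdj i f g)
    (hfg' : FlagAdj i f' g') (hpred : f i.castSucc.castSucc = f' i.castSucc.castSucc)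
    (hself : f (properLevel i) = f' (properLevel i)) (hsucc : f i.succ.succ = f' i.succ.succ) :
    g (properLevel i) = g' (properLevel i) := by
  obtain ⟨K, -, hK⟩ := hQ.exists_forall_mem_Ioo_iff f i
  have hg := ((hK _).1 hfg.apply_mem_Ioo).resolve_left fun h => (hfg _).1 h rfl
  have hg' := ((hK (g' (properLevel i))).1 (hpred ▸ hsucc ▸ hfg'.apply_mem_Ioo)).resolve_left
    fun h => (hfg' _).1 (h.trans hself) rfl
  exact hg.trans hg'.symm

lemma unique (hQ : IsAbstractPolytope (n : ℤ) rk) (hg : FlagAdj i f g)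
    (hg' : FlagAdj i f g') : g = g' := by
  ext s
  rcases eq_or_ne s (properLevel i) with rfl | hs
  · exact hg.apply_eq_apply hQ hg' rfl rfl rfl
  · exact ((hg s).2 hs).trans ((hg' s).2 hs).symm

lemma comm (hQ : IsAbstractPolytope (n : ℤ) rk) (hij : (i : ℕ) + 1 < j) {h k : Fin (n + 2) ↪o Q}
    (hfg : FlagAdj i f g) (hfh : FlagAdj j f h) (hgk : FlagAdj j g k) : FlagAdj i h k := by
  intro s
  rcases eq_or_ne s (properLevel j) with rfl | hsj
  · have hfg_eq {t : Fin (n + 2)} (ht : (j : ℕ) ≤ t) : g t = f t := (hfg t).2 fun h => by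
      simp only [h, val_properLevel] at ht
      omega
    rw [hgk.apply_eq_apply hQ hfh (hfg_eq le_rfl) (hfg_eq (by simp))
      (hfg_eq (by simp only [Fin.val_succ]; omega))]
    simp only [ne_eq, true_iff, properLevel_injective.eq_iff]
    omega
  · rw [(hgk s).2 hsj, (hfh s).2 hsj, hfg s]

lemma isPolytopeAdj (hQ : IsAbstractPolytope (n : ℤ) rk) (h : FlagAdj i f g) {c d : Flag Q}
    (hc : Set.range f = c) (hd : Set.range g = d) : IsPolytopeAdj rk i c d := by
  have hrank {F : Q} {t : Fin (n + 2)} {k : Fin (n + 2) ↪o Q} (hF : k t = F) :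
      rk F = i ↔ t = properLevel i := by
    rw [← hF, hQ.rank_apply, Fin.ext_iff, val_properLevel]
    omega
  have hmem {f g : Fin (n + 2) ↪o Q} (h : FlagAdj i f g) {F : Q} (hF : rk F ≠ i) :
      F ∈ Set.range f → F ∈ Set.range g := by
    rintro ⟨s, rfl⟩
    exact ⟨s, (h s).2 fun hs => hF ((hrank rfl).2 hs)⟩
  refine ⟨?_, fun F hF => ?_⟩
  · rintro rfl
    obtain ⟨s, hs⟩ : f (properLevel i) ∈ Set.range g := by simp [hd, ← hc]
    obtain rfl : s = properLevel i := (hrank hs).1 ((hrank rfl).2 rfl)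
    exact (h _).1 hs rfl
  · rw [← SetLike.mem_coe, ← SetLike.mem_coe, ← hc, ← hd]
    exact ⟨hmem h hF, hmem h.symm hF⟩

end FlagAdj

namespace IsAbstractPolytope

variable {Q : Type*} [PartialOrder Q] {n : ℕ} {rk : Q → ℤ}

/-- The permutation of the flags exchanging each flag with its `i`-adjacent one. These generate
the monodromy group of the polytope. -/
noncomputable def adjPerm (hQ : IsAbstractPolytope (n : ℤ) rk) (i : Fin n) :
    Equiv.Perm (Fin (n + 2) ↪o Q) :=
  Function.Involutive.toPerm (fun f => (hQ.exists_flagAdj f i).choose) fun f =>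
    (hQ.exists_flagAdj _ i).choose_spec.unique hQ (hQ.exists_flagAdj f i).choose_spec.symm

variable (hQ : IsAbstractPolytope (n : ℤ) rk) {i j : Fin n}

lemma flagAdj_adjPerm (i : Fin n) (f : Fin (n + 2) ↪o Q) : FlagAdj i f (hQ.adjPerm i f) :=
  (hQ.exists_flagAdj f i).choose_spec

lemma adjPerm_mul_self (i : Fin n) : hQ.adjPerm i * hQ.adjPerm i = 1 :=
  Equiv.ext (Function.Involutive.toPerm_involutive _)

lemma adjPerm_ne_one (i : Fin n) : hQ.adjPerm i ≠ 1 := by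
  obtain ⟨f⟩ := hQ.nonempty_orderEmbedding
  intro h
  exact (hQ.flagAdj_adjPerm i f (properLevel i)).1 (by rw [h, Equiv.Perm.one_apply]) rfl

lemma commute_adjPerm (hij : (i : ℕ) + 1 < j) : Commute (hQ.adjPerm i) (hQ.adjPerm j) :=
  Equiv.ext fun f => (hQ.flagAdj_adjPerm i _).unique hQ <|
    (hQ.flagAdj_adjPerm i f).comm hQ hij (hQ.flagAdj_adjPerm j f) (hQ.flagAdj_adjPerm j _)

end IsAbstractPolytope

lemma closure_image_inf_closure_image_le {G ι : Type*} [Group G] {g : ι → G} {J : Set ι}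
    {T : G →* G} (hT : ∀ i, T (g i) = J.mulIndicator g i) (I : Set ι) :
    Subgroup.closure (g '' I) ⊓ Subgroup.closure (g '' J) ≤ Subgroup.closure (g '' (I ∩ J)) := by
  rintro x ⟨hI, hJ⟩
  have hfix : Set.EqOn T (MonoidHom.id G) (Subgroup.closure (g '' J)) := by
    refine MonoidHom.eqOn_closure ?_
    rintro _ ⟨i, hi, rfl⟩
    rw [hT, Set.mulIndicator_of_mem hi, MonoidHom.id_apply]
  have hle : Subgroup.closure (g '' I) ≤ (Subgroup.closure (g '' (I ∩ J))).comap T := by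
    rw [Subgroup.closure_le]
    rintro _ ⟨i, hi, rfl⟩
    rw [SetLike.mem_coe, Subgroup.mem_comap, hT]
    by_cases hiJ : i ∈ J
    · rw [Set.mulIndicator_of_mem hiJ]
      exact Subgroup.subset_closure ⟨i, ⟨hi, hiJ⟩, rfl⟩
    · rw [Set.mulIndicator_of_notMem hiJ]
      exact one_mem _
  have hx : T x = x := hfix hJ
  exact hx ▸ hle hI

section Mix

variable {ι M : Type*} [Group M] (m : ι → M)

/-- The tuple of all truncations of the `i`-th member of the family `m`, where the truncation to a
set of indices replaces the members of index outside that set by `1`. -/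
noncomputable def truncations (i : ι) : Set ι → M := fun S => S.mulIndicator m i

lemma pi_eval_inter_truncations (J : Set ι) (i : ι) :
    MonoidHom.pi (fun S : Set ι => Pi.evalMonoidHom (fun _ => M) (J ∩ S)) (truncations m i) =
      J.mulIndicator (truncations m) i := by
  ext S
  by_cases hJ : i ∈ J <;> simp [truncations, ← Set.mulIndicator_mulIndicator, hJ]

/-- The mix of all truncations of the family `m`: the group they generate together, acting
diagonally on the product of copies of `M`. -/
def Mix : Subgroup (Set ι → M) := Subgroup.closure (Set.range (truncations m))

namespace Mix

/-- The generators of the mix. -/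
noncomputable def gen (i : ι) : Mix m := ⟨truncations m i, Subgroup.subset_closure ⟨i, rfl⟩⟩

/-- The projection of the mix onto the factor in which nothing is truncated. -/
def proj : Mix m →* M := (Pi.evalMonoidHom _ Set.univ).comp (Mix m).subtype

lemma proj_gen (i : ι) : proj m (gen m i) = m i := by
  simp [proj, gen, truncations]

lemma map_subtype_closure_gen (I : Set ι) :
    (Subgroup.closure (gen m '' I)).map (Mix m).subtype =
      Subgroup.closure (truncations m '' I) := by
  rw [MonoidHom.map_closure, Set.image_image]
  rfl

lemma closure_range_gen : Subgroup.closure (Set.range (gen m)) = ⊤ := by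
  refine Subgroup.map_injective (Mix m).subtype_injective ?_
  rw [← Set.image_univ, map_subtype_closure_gen, Set.image_univ, ← MonoidHom.range_eq_map,
    Subgroup.range_subtype, Mix]

lemma closure_gen_inf_closure_gen_le (I J : Set ι) :
    Subgroup.closure (gen m '' I) ⊓ Subgroup.closure (gen m '' J) ≤
      Subgroup.closure (gen m '' (I ∩ J)) := by
  rw [← Subgroup.map_le_map_iff_of_injective (Mix m).subtype_injective,
    Subgroup.map_inf _ _ _ (Mix m).subtype_injective]
  simp only [map_subtype_closure_gen]
  exact closure_image_inf_closure_image_le (pi_eval_inter_truncations m J) I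

end Mix

/-- The mix of all truncations of involutions satisfying the string relations is a string
C-group. -/
noncomputable def StringCGroup.mix {n : ℕ} {m : Fin n → M} (mul_self : ∀ i, m i * m i = 1)
    (ne_one : ∀ i, m i ≠ 1) (comm : ∀ i j : Fin n, (i : ℕ) + 1 < j → Commute (m i) (m j)) :
    StringCGroup n (Mix m) where
  gen := Mix.gen m
  gen_mul_self i := Subtype.ext <| funext fun S => by
    by_cases hi : i ∈ S <;> simp [Mix.gen, truncations, hi, mul_self]
  gen_ne_one i h := ne_one i (by rw [← Mix.proj_gen m, h, map_one])
  commute_gen i j hij := Subtype.ext <| funext fun S => by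
    by_cases hi : i ∈ S <;> by_cases hj : j ∈ S <;>
      simp [Mix.gen, truncations, hi, hj, (comm i j hij).eq]
  closure_range_gen := Mix.closure_range_gen m
  closure_inf_closure_le := Mix.closure_gen_inf_closure_gen_le m

end Mix

theorem StringCGroup.exists_isPolytopeCovering {n : ℕ} {Γ Q : Type*} [Group Γ] [PartialOrder Q]
    {rk : Q → ℤ} (P : StringCGroup n Γ) (hQ : IsAbstractPolytope (n : ℤ) rk)
    (v : Γ → Fin (n + 2) ↪o Q) (hv : ∀ a i, FlagAdj i (v a) (v (a * P.gen i))) :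
    ∃ η : P.Face → Q, IsPolytopeCovering rank rk η := by
  have hmul {s : Fin (n + 2)} (a : Γ) {x : Γ} (hx : x ∈ P.parabolic {s}ᶜ) :
      v (a * x) s = v a s := by
    induction hx using parabolic_induction with
    | one => rw [mul_one]
    | mul_gen x i _ hi ih => rw [← ih, ← mul_assoc, (hv (a * x) i s).2 (Ne.symm hi)]
  have hcongr {s : Fin (n + 2)} {a b : Γ} (hab : P.face s a = P.face s b) : v a s = v b s := by
    rw [← hmul a (face_eq_face.1 hab), mul_inv_cancel_left]
  choose b hb using exists_face_eq (P := P)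
  let η (F : P.Face) : Q := v (b F) (level F)
  have hη (s : Fin (n + 2)) (a : Γ) : η (P.face s a) = v a s := hcongr (hb (P.face s a))
  have himage (a : Γ) : η '' P.flag a = Set.range (v a) := by
    rw [coe_flag, ← Set.range_comp]
    exact congrArg Set.range (funext fun s => hη s a)
  refine ⟨η, ?_, fun F => hQ.rank_apply _ _, fun c => ?_, fun j c d c' d' hc hd hcd => ?_⟩
  · rintro F G ⟨hFG, a, hF, hG⟩
    rw [← hF, ← hG, hη, hη]
    exact (v a).monotone hFG
  · obtain ⟨a, rfl⟩ := exists_flag_eq c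
    exact ⟨Flag.ofIsMaxChain _ (hQ.isMaxChain_range (v a)), himage a⟩
  · obtain ⟨a, rfl⟩ := exists_flag_eq c
    obtain ⟨b, rfl⟩ := exists_flag_eq d
    obtain ⟨i, rfl, rfl⟩ := exists_gen_of_isPolytopeAdj hcd
    exact (hv a i).isPolytopeAdj hQ ((himage a).symm.trans hc) ((himage _).symm.trans hd)

theorem finite_polytope_has_finite_regular_cover_general {n : ℕ} {Q : Type u} [PartialOrder Q]
    (rkQ : Q → ℤ) (hQ : IsAbstractPolytope (n : ℤ) rkQ) :
    ∃ (R : Type u) (_ : PartialOrder R) (rkR : R → ℤ),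
      IsAbstractPolytope (n : ℤ) rkR ∧ (Finite Q → Finite R) ∧ IsRegularPolytope (P := R) ∧
        ∃ η : R → Q, IsPolytopeCovering rkR rkQ η := by
  obtain ⟨f₀⟩ := hQ.nonempty_orderEmbedding
  let P := StringCGroup.mix hQ.adjPerm_mul_self hQ.adjPerm_ne_one fun _ _ => hQ.commute_adjPerm
  let v (a : Mix hQ.adjPerm) : Fin (n + 2) ↪o Q := Mix.proj hQ.adjPerm a⁻¹ f₀
  have hv (a) (i) : FlagAdj i (v a) (v (a * P.gen i)) := by
    have hmul : v (a * P.gen i) = hQ.adjPerm i (v a) := by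
      simp only [v]
      rw [mul_inv_rev, StringCGroup.gen_inv, map_mul, Equiv.Perm.mul_apply]
      exact DFunLike.congr_fun (Mix.proj_gen hQ.adjPerm i) _
    exact hmul ▸ hQ.flagAdj_adjPerm i (v a)
  refine ⟨P.Face, inferInstance, StringCGroup.rank, P.isAbstractPolytope, fun _ => ?_,
    P.isRegularPolytope, P.exists_isPolytopeCovering hQ v hv⟩
  have : Finite (Fin (n + 2) ↪o Q) := DFunLike.finite _
  infer_instance

/-- **Every finite abstract `n`-polytope is covered by a finite regular abstract
`n`-polytope.** -/
theorem finite_polytope_has_finite_regular_cover {n : ℕ} {Q : Type} [PartialOrder Q]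
    [Finite Q] (rkQ : Q → ℤ) (hQ : IsAbstractPolytope (n : ℤ) rkQ) :
    ∃ R : BundledPolytope (n : ℤ), Finite R.carrier ∧ IsRegularPolytope (P := R.carrier) ∧
      ∃ η : R.carrier → Q, IsPolytopeCovering R.rk rkQ η := by
  obtain ⟨R, _, rkR, hR, hfin, hreg, hη⟩ :=
    finite_polytope_has_finite_regular_cover_general rkQ hQ
  exact ⟨⟨R, rkR, hR⟩, hfin inferInstance, hreg, hη⟩
end

section
/- Let Q be a finite abstract n-polytope and let 1 ≤ k ≤ n-1. If every k-face of Q (that is, every section F/F_{-1} where rk(F) = k and F_{-1} is the least face) is isomorphic as a partially ordered set to one fixed regular k-polytope K, then there exists a finite regular n-polytope R covering Q all of whose k-faces are isomorphic to K. -/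
/-!
The flips `φ ↦ φ.flip l` act on the flags of a polytope and generate its monodromy group; words in
the flips with `l ∈ S` connect any two flags that agree in all ranks outside `S`. Because the
`k`-faces are isomorphic to one regular polytope, an isomorphism between two of them carrying one
flag to another commutes with the flips below rank `k`, so the subgroup generated by these flips
acts freely on all flags and has the intersection property.

The whole monodromy group need not have the intersection property, so it is mixed with its
truncations: let `G` be generated by the tuples whose entry indexed by `m ∈ [k, n]` is the flip at
`l` if `l < m` and trivial otherwise. Lowering the indices defines retractions of `G` onto the
subgroups generated by the first `m ≥ k` generators, and together with the property below rank `k`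
this makes `G` a string C-group. Its coset geometry is a regular polytope, and mapping the chamber
`g` to the image of a base flag under `g⁻¹` is a covering. The first `k` generators of `G` act
freely on the flags below, hence the covering is an isomorphism on `k`-faces.
-/

/-! ### String groups and string C-groups -/

/-- The standard parabolic subgroup of `r` on `S`, generated by the `r i` with `i ∈ S`. -/
def parabolic {G : Type*} [Group G] (r : ℤ → G) (S : Set ℤ) : Subgroup G :=
  Subgroup.closure (r '' S)

/-- String groups of rank `n`: independent involutions `r 0, …, r (n - 1)`, non-consecutive ones
commuting. The family is indexed by `ℤ` and trivial outside `0 ≤ i < n`, so that ranks of faces can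
serve as indices. -/
structure IsStringGroup {G : Type*} [Group G] (n : ℤ) (r : ℤ → G) : Prop where
  mul_self : ∀ i, r i * r i = 1
  commute : ∀ i j, i + 2 ≤ j → Commute (r i) (r j)
  eq_one : ∀ i, i < 0 ∨ n ≤ i → r i = 1
  notMem : ∀ i, 0 ≤ i → i < n → r i ∉ parabolic r {i}ᶜ

/-- String C-groups: generating families as in `IsStringGroup` with the intersection property. Only
intersections of two maximal parabolic subgroups are constrained; this is what makes the coset
geometry below a polytope. -/
structure IsStringCGroup_s2 {G : Type*} [Group G] (n : ℤ) (r : ℤ → G) : Prop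
    extends IsStringGroup n r where
  generates : parabolic r Set.univ = ⊤
  inf_le : ∀ i j, parabolic r {i}ᶜ ⊓ parabolic r {j}ᶜ ≤ parabolic r {i, j}ᶜ

section Parabolic

variable {G : Type*} [Group G] {r : ℤ → G} {S T : Set ℤ}

theorem mem_parabolic {i : ℤ} (hi : i ∈ S) : r i ∈ parabolic r S :=
  Subgroup.subset_closure ⟨i, hi, rfl⟩

theorem parabolic_mono (h : S ⊆ T) : parabolic r S ≤ parabolic r T :=
  Subgroup.closure_mono (Set.image_mono h)

theorem parabolic_le {N : Subgroup G} (h : ∀ i ∈ S, r i ∈ N) : parabolic r S ≤ N :=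
  (Subgroup.closure_le N).2 (Set.forall_mem_image.2 h)

theorem parabolic_congr {r' : ℤ → G} (h : Set.EqOn r r' S) : parabolic r S = parabolic r' S := by
  rw [parabolic, parabolic, h.image_eq]

theorem map_parabolic {H : Type*} [Group H] (f : G →* H) (r : ℤ → G) (S : Set ℤ) :
    (parabolic r S).map f = parabolic (fun i => f (r i)) S := by
  rw [parabolic, parabolic, MonoidHom.map_closure, Set.image_image]

theorem commute_of_mem_parabolic (hST : ∀ i ∈ S, ∀ j ∈ T, Commute (r i) (r j)) {a b : G}
    (ha : a ∈ parabolic r S) (hb : b ∈ parabolic r T) : Commute a b := by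
  have hS : parabolic r S ≤ Subgroup.centralizer (r '' T) :=
    parabolic_le fun i hi => Subgroup.mem_centralizer_iff.2 <|
      Set.forall_mem_image.2 fun j hj => (hST i hi j hj).symm
  exact Subgroup.mem_centralizer_iff.1 (Subgroup.closure_le_centralizer_centralizer _ hb) a (hS ha)

theorem exists_mul_eq_of_mem_parabolic_union (hST : ∀ i ∈ S, ∀ j ∈ T, Commute (r i) (r j)) {g : G}
    (hg : g ∈ parabolic r (S ∪ T)) : ∃ a ∈ parabolic r S, ∃ b ∈ parabolic r T, a * b = g := by
  have hcomm (a : parabolic r S) (b : parabolic r T) :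
      Commute ((parabolic r S).subtype a) ((parabolic r T).subtype b) :=
    commute_of_mem_parabolic hST a.2 b.2
  rw [parabolic, Set.image_union, Subgroup.closure_union, ← parabolic, ← parabolic,
    ← (parabolic r S).range_subtype, ← (parabolic r T).range_subtype,
    ← MonoidHom.noncommCoprod_range _ _ hcomm] at hg
  obtain ⟨⟨a, b⟩, rfl⟩ := hg
  exact ⟨a, a.2, b, b.2, rfl⟩

theorem eq_one_or_eq_of_mem_parabolic_singleton {i : ℤ} (hi : r i * r i = 1) {g : G}
    (hg : g ∈ parabolic r {i}) : g = 1 ∨ g = r i := by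
  rw [parabolic, Set.image_singleton] at hg
  induction hg using Subgroup.closure_induction with
  | mem x hx => exact Or.inr hx
  | one => exact Or.inl rfl
  | mul x y _ _ hx hy => rcases hx with rfl | rfl <;> rcases hy with rfl | rfl <;> simp [hi]
  | inv x _ hx =>
    rcases hx with rfl | rfl
    · exact Or.inl inv_one
    · exact Or.inr (inv_eq_of_mul_eq_one_left hi)

theorem parabolic_Iio_inf_le_of_retraction {m : ℤ} (f : G →* G) (hlt : ∀ i < m, f (r i) = r i)
    (hge : ∀ i, m ≤ i → f (r i) = 1) (S : Set ℤ) :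
    parabolic r (Set.Iio m) ⊓ parabolic r S ≤ parabolic r (S ∩ Set.Iio m) := by
  rintro g ⟨hgm, hgS⟩
  have hfix : f g = g :=
    MonoidHom.eqOn_closure (g := MonoidHom.id G) (Set.forall_mem_image.2 hlt) hgm
  have hle : parabolic (fun i => f (r i)) S ≤ parabolic r (S ∩ Set.Iio m) := by
    refine parabolic_le fun i hi => ?_
    rcases lt_or_ge i m with him | him
    · rw [hlt i him]
      exact mem_parabolic ⟨hi, him⟩
    · rw [hge i him]
      exact one_mem _
  rw [← hfix]
  exact hle (map_parabolic f r S ▸ Subgroup.mem_map_of_mem f hgS)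

/-- The generator `r i` as an element of the group generated by the whole family. -/
def toParabolicUniv (r : ℤ → G) (i : ℤ) : parabolic r Set.univ :=
  ⟨r i, mem_parabolic (Set.mem_univ i)⟩

theorem mem_parabolic_toParabolicUniv {g : parabolic r Set.univ} :
    g ∈ parabolic (toParabolicUniv r) S ↔ (g : G) ∈ parabolic r S := by
  have hmap : (parabolic (toParabolicUniv r) S).map (Subgroup.subtype _) = parabolic r S :=
    map_parabolic _ _ _
  rw [← hmap]
  exact (Subgroup.mem_map_iff_mem Subtype.val_injective).symm

end Parabolic

namespace IsStringGroup

variable {G : Type*} [Group G] {n : ℤ} {r : ℤ → G}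

theorem commute_Iio_Ioi (hr : IsStringGroup n r) {j : ℤ} :
    ∀ i ∈ Set.Iio j, ∀ l ∈ Set.Ioi j, Commute (r i) (r l) := by
  intro i (hi : i < j) l (hl : j < l)
  exact hr.commute i l (by omega)

theorem exists_mul_eq_of_mem_parabolic_compl (hr : IsStringGroup n r) {j : ℤ} {g : G}
    (hg : g ∈ parabolic r {j}ᶜ) :
    ∃ a ∈ parabolic r (Set.Iio j), ∃ b ∈ parabolic r (Set.Ioi j), a * b = g :=
  exists_mul_eq_of_mem_parabolic_union hr.commute_Iio_Ioi (by rwa [Set.Iio_union_Ioi])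

theorem parabolic_compl_inf_le (hr : IsStringGroup n r)
    (hIio : ∀ j S, parabolic r (Set.Iio j) ⊓ parabolic r S ≤ parabolic r (S ∩ Set.Iio j))
    (i j : ℤ) : parabolic r {i}ᶜ ⊓ parabolic r {j}ᶜ ≤ parabolic r {i, j}ᶜ := by
  wlog hij : i ≤ j generalizing i j
  · rw [inf_comm, Set.pair_comm]
    exact this j i (le_of_not_ge hij)
  rintro _ ⟨hgi, hgj⟩
  obtain ⟨a, ha, b, hb, rfl⟩ := hr.exists_mul_eq_of_mem_parabolic_compl hgj
  have hIoi : Set.Ioi j ⊆ ({i, j}ᶜ : Set ℤ) := by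
    rintro l (hl : j < l) (rfl | rfl) <;> omega
  have hai : a ∈ parabolic r {i}ᶜ :=
    (Subgroup.mul_mem_cancel_right _ (parabolic_mono (hIoi.trans (by simp)) hb)).1 hgi
  refine mul_mem (parabolic_mono ?_ (hIio j _ ⟨ha, hai⟩)) (parabolic_mono hIoi hb)
  rintro l ⟨hli, hlj : l < j⟩ (rfl | rfl)
  exacts [hli rfl, hlj.false]

theorem isStringCGroup_toParabolicUniv (hr : IsStringGroup n r)
    (hinf : ∀ i j, parabolic r {i}ᶜ ⊓ parabolic r {j}ᶜ ≤ parabolic r {i, j}ᶜ) :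
    IsStringCGroup_s2 n (toParabolicUniv r) where
  mul_self i := Subtype.ext (hr.mul_self i)
  commute i j hij := Subtype.ext (hr.commute i j hij)
  eq_one i hi := Subtype.ext (hr.eq_one i hi)
  notMem i hi0 hin h := hr.notMem i hi0 hin (mem_parabolic_toParabolicUniv.1 h)
  generates := eq_top_iff.2 fun g _ => mem_parabolic_toParabolicUniv.2 g.2
  inf_le i j _ hg := mem_parabolic_toParabolicUniv.2 <| hinf i j
    ⟨mem_parabolic_toParabolicUniv.1 hg.1, mem_parabolic_toParabolicUniv.1 hg.2⟩

end IsStringGroup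

/-! ### The mix of the truncations of a string group -/

/-- The simultaneous truncations of a family `s` at all `m ∈ [k, n]`: in the coordinate `m`, the
generators `s l` with `m ≤ l` are replaced by `1`. These elements generate the mix of the truncated
groups. -/
def truncation {M : Type*} [Group M] (k n : ℤ) (s : ℤ → M) (l : ℤ) : Set.Icc k n → M :=
  fun m => if l < m then s l else 1

section Truncation

variable {M : Type*} [Group M] {k n : ℤ} {s : ℤ → M}

theorem truncation_of_lt {l : ℤ} (hl : l < k) :
    truncation k n s l = Pi.constMonoidHom (Set.Icc k n) M (s l) :=
  funext fun m => if_pos (hl.trans_le m.2.1)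

theorem truncation_apply_top (hkn : k ≤ n) (hs : ∀ l, n ≤ l → s l = 1) (l : ℤ) :
    truncation k n s l ⟨n, hkn, le_rfl⟩ = s l :=
  ite_eq_left_iff.2 fun hl => (hs l (not_lt.1 hl)).symm

theorem parabolic_truncation_of_subset_Iio {S : Set ℤ} (hS : S ⊆ Set.Iio k) :
    parabolic (truncation k n s) S =
      (parabolic s S).map (Pi.constMonoidHom (Set.Icc k n) M) := by
  rw [map_parabolic]
  exact parabolic_congr fun l hl => truncation_of_lt (hS hl)

theorem isStringGroup_truncation (hs : IsStringGroup n s) (hkn : k ≤ n) :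
    IsStringGroup n (truncation k n s) where
  mul_self i := by
    funext m
    by_cases hi : i < m <;> simp [truncation, hi, hs.mul_self]
  commute i j hij := by
    funext m
    have := (hs.commute i j hij).eq
    by_cases hi : i < m <;> by_cases hj : j < m <;> simp [truncation, hi, hj, this]
  eq_one i hi := by
    funext m
    simp [truncation, hs.eq_one i hi]
  notMem i hi0 hin h := by
    have hmap := Subgroup.mem_map_of_mem (Pi.evalMonoidHom _ ⟨n, hkn, le_rfl⟩) h
    simp only [map_parabolic, Pi.evalMonoidHom_apply,
      truncation_apply_top hkn fun l hl => hs.eq_one l (Or.inr hl)] at hmap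
    exact hs.notMem i hi0 hin hmap

/- Replacing every coordinate `m'` by the coordinate `min m m'` kills the generators of index at
least `m` and fixes the others. -/
theorem parabolic_truncation_Iio_inf_le_of_le {m : ℤ} (hkm : k ≤ m) (S : Set ℤ) :
    parabolic (truncation k n s) (Set.Iio m) ⊓ parabolic (truncation k n s) S ≤
      parabolic (truncation k n s) (S ∩ Set.Iio m) := by
  let cut (m' : Set.Icc k n) : Set.Icc k n :=
    ⟨min m m', le_min hkm m'.2.1, (min_le_right _ _).trans m'.2.2⟩
  refine parabolic_Iio_inf_le_of_retraction
    (MonoidHom.pi fun m' => Pi.evalMonoidHom _ (cut m')) (fun i hi => ?_) (fun i hi => ?_) S <;>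
    funext m'
  · simp [truncation, cut, hi]
  · simp [truncation, cut, hi.not_gt]

theorem parabolic_truncation_Iio_inf_le (hkn : k ≤ n)
    (hinf : ∀ S ⊆ Set.Iio k, ∀ T ⊆ Set.Iio k,
      parabolic s S ⊓ parabolic s T ≤ parabolic s (S ∩ T)) (j : ℤ) (S : Set ℤ) :
    parabolic (truncation k n s) (Set.Iio j) ⊓ parabolic (truncation k n s) S ≤
      parabolic (truncation k n s) (S ∩ Set.Iio j) := by
  rcases le_or_gt k j with hkj | hjk
  · exact parabolic_truncation_Iio_inf_le_of_le hkj S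
  have hj : Set.Iio j ⊆ Set.Iio k := Set.Iio_subset_Iio hjk.le
  have hSk : S ∩ Set.Iio k ⊆ Set.Iio k := Set.inter_subset_right
  have : Nonempty (Set.Icc k n) := ⟨⟨n, hkn, le_rfl⟩⟩
  calc _ ≤ parabolic (truncation k n s) (S ∩ Set.Iio k) ⊓
          parabolic (truncation k n s) (Set.Iio j) :=
        le_inf ((inf_le_inf_right _ (parabolic_mono hj)).trans
          (parabolic_truncation_Iio_inf_le_of_le le_rfl S)) inf_le_left
    _ = (parabolic s (S ∩ Set.Iio k) ⊓ parabolic s (Set.Iio j)).map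
          (Pi.constMonoidHom (Set.Icc k n) M) := by
        rw [Subgroup.map_inf _ _ _ Function.const_injective,
          parabolic_truncation_of_subset_Iio hSk, parabolic_truncation_of_subset_Iio hj]
    _ ≤ (parabolic s (S ∩ Set.Iio k ∩ Set.Iio j)).map (Pi.constMonoidHom (Set.Icc k n) M) :=
        Subgroup.map_mono (hinf _ hSk _ hj)
    _ = parabolic (truncation k n s) (S ∩ Set.Iio k ∩ Set.Iio j) :=
        (parabolic_truncation_of_subset_Iio (Set.inter_subset_left.trans hSk)).symm
    _ ≤ parabolic (truncation k n s) (S ∩ Set.Iio j) :=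
        parabolic_mono (Set.inter_subset_inter_left _ Set.inter_subset_left)

end Truncation

theorem IsStringGroup.exists_isStringCGroup_lift.{u} {M : Type u} [Group M] {k n : ℤ} {s : ℤ → M}
    (hs : IsStringGroup n s) (hkn : k ≤ n)
    (hinf : ∀ S ⊆ Set.Iio k, ∀ T ⊆ Set.Iio k,
      parabolic s S ⊓ parabolic s T ≤ parabolic s (S ∩ T)) :
    ∃ (G : Type u) (_ : Group G) (r : ℤ → G) (π : G →* M), IsStringCGroup_s2 n r ∧
      (∀ l, π (r l) = s l) ∧ (∀ a ∈ parabolic r (Set.Iio k), π a = 1 → a = 1) ∧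
      (Finite M → Finite G) := by
  let top : Set.Icc k n := ⟨n, hkn, le_rfl⟩
  let π : parabolic (truncation k n s) Set.univ →* M :=
    (Pi.evalMonoidHom (fun _ => M) top).comp (Subgroup.subtype _)
  have ht : IsStringGroup n (truncation k n s) := isStringGroup_truncation hs hkn
  refine ⟨parabolic (truncation k n s) Set.univ, inferInstance, toParabolicUniv _, π,
    ht.isStringCGroup_toParabolicUniv
      (ht.parabolic_compl_inf_le (parabolic_truncation_Iio_inf_le hkn hinf)),
    truncation_apply_top hkn fun l hl => hs.eq_one l (Or.inr hl), fun a ha hπa => ?_,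
    fun _ => inferInstance⟩
  rw [mem_parabolic_toParabolicUniv, parabolic_truncation_of_subset_Iio subset_rfl] at ha
  obtain ⟨x, -, hx⟩ := ha
  obtain rfl : x = 1 := (congrFun hx top).trans hπa
  exact Subtype.ext (hx.symm.trans (map_one _))

/-! ### Flags of sections -/

section Flags

variable {P : Type*} [PartialOrder P]

/-- The part of a flag `c` in a subset `S`, as a flag of `S`. This is maximal because every face of
`c` outside `S` is a lower or an upper bound of `S`; sections are the intended subsets. -/
def restrictFlag (c : Flag P) (S : Set P)
    (hS : ∀ b ∈ c, b ∉ S → (∀ x ∈ S, b ≤ x) ∨ ∀ x ∈ S, x ≤ b) : Flag S where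
  carrier := {x | x.1 ∈ c}
  Chain' _ hx _ hy _ := c.le_or_le hx hy
  max_chain' := by
    refine fun s hs hcs => hcs.antisymm fun x hx => Flag.mem_iff_forall_le_or_ge.2 fun b hb => ?_
    by_cases hbS : b ∈ S
    · exact hs.total hx (hcs (show (⟨b, hbS⟩ : S).1 ∈ c from hb))
    · exact (hS b hb hbS).symm.imp (· x x.2) (· x x.2)

/-- The flag of the section `G / F` obtained from a flag through `F` and `G`. -/
def restrictFlagIcc (c : Flag P) {F G : P} (hF : F ∈ c) (hG : G ∈ c) : Flag (Set.Icc F G) :=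
  restrictFlag c (Set.Icc F G) fun b hb hbFG => by
    rcases c.le_or_le hb hF with hbF | hFb
    · exact Or.inl fun x hx => hbF.trans hx.1
    · have hGb : G ≤ b := (c.le_or_le hb hG).resolve_left fun hbG => hbFG ⟨hFb, hbG⟩
      exact Or.inr fun x hx => hx.2.trans hGb

/-- The flag of the section below `F` obtained from a flag through `F`. -/
def restrictFlagIic (c : Flag P) {F : P} (hF : F ∈ c) : Flag (Set.Iic F) :=
  restrictFlag c (Set.Iic F) fun _ hb hbF => Or.inr fun _ hx =>
    le_trans hx ((c.le_or_le hb hF).resolve_left hbF)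

theorem exists_flag_mem_iff_of_flag_Icc {F G : P} (hFG : F ≤ G) (c : Flag (Set.Icc F G)) :
    ∃ d : Flag P, F ∈ d ∧ G ∈ d ∧ ∀ x, x ∈ c ↔ x.1 ∈ d := by
  obtain ⟨d, hd⟩ := ((Subtype.mono_coe _).isChain_image c.chain_le).exists_subset_flag
  have hcd : ∀ x ∈ c, x.1 ∈ d := fun x hx => hd ⟨x, hx, rfl⟩
  refine ⟨d, hcd ⟨F, le_rfl, hFG⟩ (Flag.mem_iff_forall_le_or_ge.2 fun x _ => Or.inl x.2.1),
    hcd ⟨G, hFG, le_rfl⟩ (Flag.mem_iff_forall_le_or_ge.2 fun x _ => Or.inr x.2.2),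
    fun x => ⟨hcd x, fun hx => ?_⟩⟩
  exact Flag.mem_iff_forall_le_or_ge.2 fun y hy => d.le_or_le hx (hcd y hy)

namespace IsPolytopeAdj

variable {rk : P → ℤ} {j : ℤ} {c d : Flag P}

theorem symm (h : IsPolytopeAdj rk j c d) : IsPolytopeAdj rk j d c :=
  ⟨h.1.symm, fun z hz => (h.2 z hz).symm⟩

theorem rk_eq_of_mem_of_notMem (h : IsPolytopeAdj rk j c d) {z : P} (hc : z ∈ c) (hd : z ∉ d) :
    rk z = j := by
  by_contra hz
  exact hd ((h.2 z hz).1 hc)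

theorem exists_mem_notMem (h : IsPolytopeAdj rk j c d) : ∃ z ∈ c, z ∉ d := by
  by_contra! hcd
  exact h.1 (Flag.ext (c.max_chain' d.chain_le hcd))

theorem exists_mem_rk_eq (h : IsPolytopeAdj rk j c d) {z : P} (hz : z ∈ c) :
    ∃ w ∈ d, rk w = rk z := by
  by_cases hzd : z ∈ d
  · exact ⟨z, hzd, rfl⟩
  · obtain ⟨w, hwd, hwc⟩ := h.symm.exists_mem_notMem
    exact ⟨w, hwd, by rw [h.symm.rk_eq_of_mem_of_notMem hwd hwc, h.rk_eq_of_mem_of_notMem hz hzd]⟩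

end IsPolytopeAdj

end Flags

/-! ### Ranked flags and flips -/

namespace IsAbstractPolytope

variable {P : Type*} [PartialOrder P] {n : ℤ} {rk : P → ℤ}

theorem rk_strictMono (hP : IsAbstractPolytope n rk) : StrictMono rk := fun _ _ => hP.strictMono

theorem rk_mono (hP : IsAbstractPolytope n rk) : Monotone rk := hP.rk_strictMono.monotone

theorem eq_of_le_of_rk_eq (hP : IsAbstractPolytope n rk) {x y : P} (h : x ≤ y)
    (hrk : rk x = rk y) : x = y :=
  h.eq_of_not_lt fun hlt => (hP.strictMono hlt).ne hrk

theorem rk_bounds (hP : IsAbstractPolytope n rk) (x : P) : -1 ≤ rk x ∧ rk x ≤ n :=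
  hP.rank_range.subset (Set.mem_range_self x)

theorem le_of_rk_eq_neg_one (hP : IsAbstractPolytope n rk) {x : P} (hx : rk x = -1) (y : P) :
    x ≤ y := by
  obtain ⟨B, hB⟩ := hP.exists_bot
  rw [← hP.eq_of_le_of_rk_eq (hB x) (by linarith [hP.rk_mono (hB x), (hP.rk_bounds B).1])]
  exact hB y

theorem le_of_rk_eq (hP : IsAbstractPolytope n rk) {y : P} (hy : rk y = n) (x : P) : x ≤ y := by
  obtain ⟨T, hT⟩ := hP.exists_top
  rw [hP.eq_of_le_of_rk_eq (hT y) (by linarith [hP.rk_mono (hT y), (hP.rk_bounds T).2])]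
  exact hT x

theorem exists_mem_flag_rk_eq (hP : IsAbstractPolytope n rk) (c : Flag P) {l : ℤ}
    (hl : l ∈ Set.Icc (-1) n) : ∃ z ∈ c, rk z = l := by
  obtain ⟨B, hB⟩ := hP.exists_bot
  obtain ⟨T, hT⟩ := hP.exists_top
  have hBmem (e : Flag P) : B ∈ e := Flag.mem_iff_forall_le_or_ge.2 fun b _ => Or.inl (hB b)
  have hTmem (e : Flag P) : T ∈ e := Flag.mem_iff_forall_le_or_ge.2 fun b _ => Or.inr (hT b)
  obtain ⟨x, hx⟩ := hP.rank_range.superset hl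
  obtain ⟨d, hd⟩ := (IsChain.singleton (r := (· ≤ ·)) (a := x)).exists_subset_flag
  have hpath := hP.strongly_connected B T (hB T) (restrictFlagIcc d (hBmem d) (hTmem d))
    (restrictFlagIcc c (hBmem c) (hTmem c))
  suffices hex : ∃ z ∈ restrictFlagIcc c (hBmem c) (hTmem c), rk z.1 = l by
    obtain ⟨z, hz, hzl⟩ := hex
    exact ⟨z.1, hz, hzl⟩
  generalize restrictFlagIcc c (hBmem c) (hTmem c) = e at hpath ⊢
  induction hpath with
  | refl => exact ⟨⟨x, hB x, hT x⟩, hd rfl, hx⟩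
  | tail _ hadj ih =>
    obtain ⟨j, hadj⟩ := hadj
    obtain ⟨z, hz, rfl⟩ := ih
    exact hadj.exists_mem_rk_eq hz

end IsAbstractPolytope

/-- A flag of a polytope of rank `n`, given by its face in each rank. Ranks below `-1` and above `n`
stand for `-1` and `n`. -/
@[ext]
structure RankedFlag {P : Type*} [PartialOrder P] (n : ℤ) (rk : P → ℤ) where
  face : ℤ → P
  mono : Monotone face
  rk_face : ∀ l, rk (face l) = max (-1) (min l n)

namespace RankedFlag

variable {P : Type*} [PartialOrder P] {n : ℤ} {rk : P → ℤ}

theorem face_lt_face (φ : RankedFlag n rk) {i j : ℤ} (hij : i < j)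
    (hi : -1 ≤ i) (hj : j ≤ n) : φ.face i < φ.face j := by
  refine (φ.mono hij.le).lt_of_ne fun h => ?_
  have := congrArg rk h
  rw [φ.rk_face, φ.rk_face] at this
  omega

theorem face_ne_of_eqOn_compl {φ ψ : RankedFlag n rk} {l : ℤ} (hψ : ψ ≠ φ)
    (hψφ : Set.EqOn ψ.face φ.face {l}ᶜ) : ψ.face l ≠ φ.face l := fun hl =>
  hψ <| RankedFlag.ext <| funext fun m => (eq_or_ne m l).elim (fun h => h ▸ hl) fun h => hψφ h

theorem rk_face_of_mem (φ : RankedFlag n rk) {l : ℤ} (hl : l ∈ Set.Icc (-1) n) :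
    rk (φ.face l) = l := by
  rw [φ.rk_face, min_eq_left hl.2, max_eq_right hl.1]

/-- The ranked flag with the faces of `φ` up to rank `i` and the faces of `ψ` from rank `i` on. -/
def splice (φ ψ : RankedFlag n rk) (i : ℤ) (h : φ.face i = ψ.face i) : RankedFlag n rk where
  face l := if l ≤ i then φ.face l else ψ.face l
  mono l m hlm := by
    by_cases hl : l ≤ i <;> by_cases hm : m ≤ i <;> simp only [hl, hm, if_true, if_false]
    · exact φ.mono hlm
    · exact (φ.mono hl).trans (h.le.trans (ψ.mono (le_of_not_ge hm)))
    · exact absurd (hlm.trans hm) hl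
    · exact ψ.mono hlm
  rk_face l := by
    split_ifs
    exacts [φ.rk_face l, ψ.rk_face l]

theorem splice_face_of_le {φ ψ : RankedFlag n rk} {i l : ℤ} (h : φ.face i = ψ.face i)
    (hl : l ≤ i) : (splice φ ψ i h).face l = φ.face l := if_pos hl

theorem splice_face_of_ge {φ ψ : RankedFlag n rk} {i l : ℤ} (h : φ.face i = ψ.face i)
    (hl : i ≤ l) : (splice φ ψ i h).face l = ψ.face l := by
  rcases hl.eq_or_lt with rfl | hl
  · exact (splice_face_of_le h le_rfl).trans h
  · exact if_neg hl.not_ge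

theorem face_eq_of_outside (hP : IsAbstractPolytope n rk) (φ ψ : RankedFlag n rk) {l : ℤ}
    (hl : l < 0 ∨ n ≤ l) : φ.face l = ψ.face l := by
  have hn := hP.neg_one_le
  rcases hl with hl | hl
  · have hrk (χ : RankedFlag n rk) : rk (χ.face l) = -1 := by rw [χ.rk_face]; omega
    exact (hP.le_of_rk_eq_neg_one (hrk φ) _).antisymm (hP.le_of_rk_eq_neg_one (hrk ψ) _)
  · have hrk (χ : RankedFlag n rk) : rk (χ.face l) = n := by rw [χ.rk_face]; omega
    exact (hP.le_of_rk_eq (hrk ψ) _).antisymm (hP.le_of_rk_eq (hrk φ) _)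

theorem face_rk_face (hP : IsAbstractPolytope n rk) (φ ψ : RankedFlag n rk) (l : ℤ) :
    ψ.face (rk (φ.face l)) = ψ.face l := by
  have hn := hP.neg_one_le
  have hrk : rk (ψ.face (rk (φ.face l))) = rk (ψ.face l) := by
    rw [ψ.rk_face, φ.rk_face, ψ.rk_face]; omega
  rcases le_total (rk (φ.face l)) l with h | h
  · exact hP.eq_of_le_of_rk_eq (ψ.mono h) hrk
  · exact (hP.eq_of_le_of_rk_eq (ψ.mono h) hrk.symm).symm

/-- The underlying flag of a ranked flag. -/
def toFlag (φ : RankedFlag n rk) (hP : IsAbstractPolytope n rk) : Flag P where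
  carrier := Set.range φ.face
  Chain' := φ.mono.isChain_range
  max_chain' := by
    refine fun s hs hφs => hφs.antisymm fun x hx => ⟨rk x, ?_⟩
    have hrk : rk (φ.face (rk x)) = rk x := φ.rk_face_of_mem (hP.rk_bounds x)
    rcases hs.total hx (hφs (Set.mem_range_self (rk x))) with h | h
    · exact (hP.eq_of_le_of_rk_eq h hrk.symm).symm
    · exact hP.eq_of_le_of_rk_eq h hrk

variable (hP : IsAbstractPolytope n rk)
include hP

theorem face_mem_toFlag (φ : RankedFlag n rk) (l : ℤ) : φ.face l ∈ φ.toFlag hP := ⟨l, rfl⟩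

theorem mem_toFlag_iff {φ : RankedFlag n rk} {x : P} : x ∈ φ.toFlag hP ↔ φ.face (rk x) = x := by
  constructor
  · rintro ⟨l, rfl⟩
    exact face_rk_face hP φ φ l
  · exact fun h => ⟨rk x, h⟩

theorem toFlag_injective : Function.Injective (toFlag (n := n) (rk := rk) · hP) := by
  intro φ ψ (h : φ.toFlag hP = ψ.toFlag hP)
  ext l
  have hl : φ.face l ∈ ψ.toFlag hP := h ▸ face_mem_toFlag hP φ l
  rw [← (mem_toFlag_iff hP).1 hl, face_rk_face hP]

theorem exists_toFlag_eq (c : Flag P) : ∃ φ : RankedFlag n rk, φ.toFlag hP = c := by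
  have hn := hP.neg_one_le
  choose f hfc hfrk using fun l : ℤ =>
    hP.exists_mem_flag_rk_eq c (l := max (-1) (min l n)) ⟨by omega, by omega⟩
  refine ⟨⟨f, fun i j hij => ?_, hfrk⟩, Flag.ext (Flag.max_chain' _ c.chain_le ?_)⟩
  · refine (c.le_or_le (hfc i) (hfc j)).elim id fun hji => (hP.eq_of_le_of_rk_eq hji ?_).ge
    have := hP.rk_mono hji
    rw [hfrk, hfrk] at *
    omega
  · exact Set.range_subset_iff.2 hfc

theorem exists_of_isChain {s : Set P} (hs : IsChain (· ≤ ·) s) :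
    ∃ φ : RankedFlag n rk, ∀ x ∈ s, φ.face (rk x) = x := by
  obtain ⟨c, hsc⟩ := hs.exists_subset_flag
  obtain ⟨φ, rfl⟩ := exists_toFlag_eq hP c
  exact ⟨φ, fun x hx => (mem_toFlag_iff hP).1 (hsc hx)⟩

theorem finite [Finite P] : Finite (RankedFlag n rk) :=
  Finite.of_injective (fun φ => (φ.toFlag hP : Set P))
    (SetLike.coe_injective.comp (toFlag_injective hP))

theorem exists_face_iff_eq_or_eq (φ : RankedFlag n rk) {l : ℤ} (hl : l ∈ Set.Ico 0 n) :
    ∃ H ≠ φ.face l, ∀ x, φ.face (l - 1) < x ∧ x < φ.face (l + 1) ↔ x = φ.face l ∨ x = H := by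
  obtain ⟨hl0, hln⟩ := hl
  have hlt : φ.face (l - 1) < φ.face l := φ.face_lt_face (by omega) (by omega) hln.le
  have hgt : φ.face l < φ.face (l + 1) := φ.face_lt_face (by omega) (by omega) (by omega)
  obtain ⟨H₁, H₂, hne, hH⟩ := hP.diamond _ _ (hlt.trans hgt) (by
    rw [φ.rk_face, φ.rk_face]; omega)
  rcases (hH _).1 ⟨hlt, hgt⟩ with h | h
  · exact ⟨H₂, h ▸ hne.symm, fun x => h ▸ hH x⟩
  · exact ⟨H₁, h ▸ hne, fun x => (h ▸ hH x).trans or_comm⟩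

theorem exists_ne_eqOn_compl (φ : RankedFlag n rk) {l : ℤ} (hl : l ∈ Set.Ico 0 n) :
    ∃ ψ ≠ φ, Set.EqOn ψ.face φ.face {l}ᶜ := by
  obtain ⟨H, hne, hH⟩ := φ.exists_face_iff_eq_or_eq hP hl
  obtain ⟨hlt, hgt⟩ := (hH H).2 (Or.inr rfl)
  have hchain : IsChain (· ≤ ·) (insert H (φ.face '' {l}ᶜ)) := by
    refine (φ.mono.isChain_range.mono (Set.image_subset_range _ _)).insert ?_
    rintro _ ⟨m, hm, rfl⟩ -
    rcases lt_or_gt_of_ne hm with hml | hlm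
    · exact Or.inr ((φ.mono (Int.le_sub_one_of_lt hml)).trans hlt.le)
    · exact Or.inl (hgt.le.trans (φ.mono hlm))
  obtain ⟨ψ, hψ⟩ := exists_of_isChain hP hchain
  refine ⟨ψ, ?_, fun m hm => ?_⟩
  · rintro rfl
    have hrkH := hψ H (Set.mem_insert _ _)
    have h₁ := hP.strictMono hlt
    have h₂ := hP.strictMono hgt
    rw [ψ.rk_face] at h₁ h₂
    obtain ⟨hl0, hln⟩ := hl
    exact hne (hrkH ▸ congrArg ψ.face (by omega))
  · exact (face_rk_face hP φ ψ m).symm.trans (hψ _ (Or.inr ⟨m, hm, rfl⟩))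

theorem mem_Ico_of_eqOn_compl {φ ψ : RankedFlag n rk} {l : ℤ} (hψ : ψ ≠ φ)
    (hψφ : Set.EqOn ψ.face φ.face {l}ᶜ) : l ∈ Set.Ico 0 n := by
  by_contra hl
  refine face_ne_of_eqOn_compl hψ hψφ (face_eq_of_outside hP ψ φ ?_)
  rw [Set.mem_Ico] at hl
  omega

omit hP in
theorem face_sub_one_lt_and_lt_face_add_one {φ ψ : RankedFlag n rk} {l : ℤ} (hl : l ∈ Set.Ico 0 n)
    (hψφ : Set.EqOn ψ.face φ.face {l}ᶜ) :
    φ.face (l - 1) < ψ.face l ∧ ψ.face l < φ.face (l + 1) := by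
  obtain ⟨hl0, hln⟩ := hl
  rw [← hψφ (show l - 1 ≠ l by omega), ← hψφ (show l + 1 ≠ l by omega)]
  exact ⟨ψ.face_lt_face (by omega) (by omega) (by omega),
    ψ.face_lt_face (by omega) (by omega) (by omega)⟩

open Classical in
/-- The flag adjacent to `φ` at rank `l`; for `l < 0` and `n ≤ l` there is none, and `φ` itself is
returned. -/
noncomputable def flip (φ : RankedFlag n rk) (l : ℤ) : RankedFlag n rk :=
  if hl : l ∈ Set.Ico 0 n then (φ.exists_ne_eqOn_compl hP hl).choose else φ

theorem flip_of_outside (φ : RankedFlag n rk) {l : ℤ} (hl : l ∉ Set.Ico 0 n) :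
    φ.flip hP l = φ := dif_neg hl

theorem flip_ne (φ : RankedFlag n rk) {l : ℤ} (hl : l ∈ Set.Ico 0 n) : φ.flip hP l ≠ φ := by
  rw [flip, dif_pos hl]
  exact (φ.exists_ne_eqOn_compl hP hl).choose_spec.1

theorem flip_eqOn (φ : RankedFlag n rk) (l : ℤ) : Set.EqOn (φ.flip hP l).face φ.face {l}ᶜ := by
  by_cases hl : l ∈ Set.Ico 0 n
  · rw [flip, dif_pos hl]
    exact (φ.exists_ne_eqOn_compl hP hl).choose_spec.2
  · rw [flip_of_outside hP φ hl]
    exact Set.eqOn_refl _ _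

theorem flip_face_ne (φ : RankedFlag n rk) {l : ℤ} (hl : l ∈ Set.Ico 0 n) :
    (φ.flip hP l).face l ≠ φ.face l :=
  face_ne_of_eqOn_compl (flip_ne hP φ hl) (flip_eqOn hP φ l)

theorem eq_flip_face {φ : RankedFlag n rk} {l : ℤ} (hl : l ∈ Set.Ico 0 n) {x : P}
    (hlt : φ.face (l - 1) < x) (hgt : x < φ.face (l + 1)) (hx : x ≠ φ.face l) :
    x = (φ.flip hP l).face l := by
  obtain ⟨H, -, hH⟩ := φ.exists_face_iff_eq_or_eq hP hl
  have hflip := (hH _).1 (face_sub_one_lt_and_lt_face_add_one hl (flip_eqOn hP φ l))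
  rw [((hH x).1 ⟨hlt, hgt⟩).resolve_left hx, hflip.resolve_left (flip_face_ne hP φ hl)]

theorem eq_or_eq_flip {φ ψ : RankedFlag n rk} {l : ℤ} (h : Set.EqOn ψ.face φ.face {l}ᶜ) :
    ψ = φ ∨ ψ = φ.flip hP l := by
  refine or_iff_not_imp_left.2 fun hψ => RankedFlag.ext (funext fun m => ?_)
  rcases eq_or_ne m l with rfl | hm
  · have hl := mem_Ico_of_eqOn_compl hP hψ h
    obtain ⟨hlt, hgt⟩ := face_sub_one_lt_and_lt_face_add_one hl h
    exact eq_flip_face hP hl hlt hgt (face_ne_of_eqOn_compl hψ h)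
  · exact (h hm).trans (flip_eqOn hP φ l hm).symm

theorem flip_flip (φ : RankedFlag n rk) (l : ℤ) : (φ.flip hP l).flip hP l = φ := by
  by_cases hl : l ∈ Set.Ico 0 n
  · exact ((eq_or_eq_flip hP (flip_eqOn hP φ l).symm).resolve_left (flip_ne hP φ hl).symm).symm
  · simp only [flip_of_outside hP _ hl]

theorem flip_comm (φ : RankedFlag n rk) {i j : ℤ} (hij : i + 2 ≤ j) :
    (φ.flip hP i).flip hP j = (φ.flip hP j).flip hP i := by
  by_cases hi : i ∈ Set.Ico 0 n; swap
  · simp only [flip_of_outside hP _ hi]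
  by_cases hj : j ∈ Set.Ico 0 n; swap
  · simp only [flip_of_outside hP _ hj]
  have hi_face {m : ℤ} (hm : i + 1 ≤ m) : (φ.flip hP i).face m = φ.face m :=
    flip_eqOn hP φ i (by rintro rfl; omega)
  have hj_face {m : ℤ} (hm : m ≤ i + 1) : (φ.flip hP j).face m = φ.face m :=
    flip_eqOn hP φ j (by rintro rfl; omega)
  let ψ : RankedFlag n rk := splice (φ.flip hP i) (φ.flip hP j) (i + 1)
    ((hi_face le_rfl).trans (hj_face le_rfl).symm)
  have hψ_le {m : ℤ} (hm : m ≤ i + 1) : ψ.face m = (φ.flip hP i).face m := splice_face_of_le _ hm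
  have hψ_ge {m : ℤ} (hm : i + 1 ≤ m) : ψ.face m = (φ.flip hP j).face m := splice_face_of_ge _ hm
  have hψi : ψ = (φ.flip hP i).flip hP j := by
    refine (eq_or_eq_flip hP fun m hm => ?_).resolve_left fun h => flip_face_ne hP φ hj ?_
    · rcases le_total m (i + 1) with h | h
      · exact hψ_le h
      · rw [hψ_ge h, hi_face h, flip_eqOn hP φ j hm]
    · rw [← hψ_ge (by omega), h, hi_face (by omega)]
  have hψj : ψ = (φ.flip hP j).flip hP i := by
    refine (eq_or_eq_flip hP fun m hm => ?_).resolve_left fun h => flip_face_ne hP φ hi ?_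
    · rcases le_total m (i + 1) with h | h
      · rw [hψ_le h, hj_face h, flip_eqOn hP φ i hm]
      · exact hψ_ge h
    · rw [← hψ_le (by omega), h, hj_face (by omega)]
  rw [← hψi, hψj]

end RankedFlag

/-! ### The monodromy group -/

namespace RankedFlag

variable {P : Type*} [PartialOrder P] {n : ℤ} {rk : P → ℤ} (hP : IsAbstractPolytope n rk)
include hP

theorem isPolytopeAdj_toFlag_iff {φ ψ : RankedFlag n rk} {j : ℤ} :
    IsPolytopeAdj rk j (φ.toFlag hP) (ψ.toFlag hP) ↔ j ∈ Set.Ico 0 n ∧ ψ = φ.flip hP j := by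
  constructor
  · rintro ⟨hne, hmem⟩
    have hψ : ψ ≠ φ := by
      rintro rfl
      exact hne rfl
    have hψφ : Set.EqOn ψ.face φ.face {j}ᶜ := by
      intro l hl
      by_cases hln : l < 0 ∨ n ≤ l
      · exact face_eq_of_outside hP ψ φ hln
      · have hrk : rk (φ.face l) = l := φ.rk_face_of_mem ⟨by omega, by omega⟩
        rw [← (mem_toFlag_iff hP).1 ((hmem _ (hrk.trans_ne hl)).1 (face_mem_toFlag hP φ l)), hrk]
    exact ⟨mem_Ico_of_eqOn_compl hP hψ hψφ, (eq_or_eq_flip hP hψφ).resolve_left hψ⟩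
  · rintro ⟨hj, rfl⟩
    refine ⟨fun h => flip_ne hP φ hj (toFlag_injective hP h).symm, fun z hz => ?_⟩
    rw [mem_toFlag_iff, mem_toFlag_iff, flip_eqOn hP φ j hz]

/-- The permutation `φ ↦ φ.flip l` of the flags of a polytope; these permutations generate its
monodromy group. -/
noncomputable def flipPerm (l : ℤ) : Equiv.Perm (RankedFlag n rk) :=
  Function.Involutive.toPerm (flip hP · l) (flip_flip hP · l)

theorem flipPerm_apply (l : ℤ) (φ : RankedFlag n rk) : flipPerm hP l φ = φ.flip hP l := rfl

theorem eqOn_apply_of_mem_parabolic {S : Set ℤ} {w : Equiv.Perm (RankedFlag n rk)}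
    (hw : w ∈ parabolic (flipPerm hP) S) (φ : RankedFlag n rk) :
    Set.EqOn (w φ).face φ.face Sᶜ := by
  induction hw using Subgroup.closure_induction generalizing φ with
  | mem _ hx =>
    obtain ⟨l, hl, rfl⟩ := hx
    exact (flip_eqOn hP φ l).mono (Set.compl_subset_compl.2 (Set.singleton_subset_iff.2 hl))
  | one => exact Set.eqOn_refl _ _
  | mul x y _ _ hx hy => exact (hx (y φ)).trans (hy φ)
  | inv x _ hx => simpa using (hx (x⁻¹ φ)).symm

theorem isStringGroup_flipPerm : IsStringGroup n (flipPerm hP) where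
  mul_self l := Equiv.ext fun φ => flip_flip hP φ l
  commute i j hij := Equiv.ext fun φ => (flip_comm hP φ hij).symm
  eq_one l hl := Equiv.ext fun φ => flip_of_outside hP φ fun h => by
    have := h.1
    have := h.2
    omega
  notMem l hl0 hln hl := by
    obtain ⟨φ, -⟩ := exists_of_isChain hP (IsChain.empty (r := (· ≤ ·)))
    exact flip_face_ne hP φ ⟨hl0, hln⟩ (eqOn_apply_of_mem_parabolic hP hl φ (by simp))

variable {φ : RankedFlag n rk} {i j : ℤ}

theorem exists_eqOn_of_flag_Icc (φ : RankedFlag n rk) (i j : ℤ)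
    (c : Flag (Set.Icc (φ.face i) (φ.face j))) :
    ∃ θ : RankedFlag n rk, Set.EqOn θ.face φ.face (Set.Ioo i j)ᶜ ∧
      ∀ x ∈ c, θ.face (rk x.1) = x.1 := by
  have hchain : IsChain (· ≤ ·)
      ((↑) '' (c : Set (Set.Icc (φ.face i) (φ.face j))) ∪ φ.face '' (Set.Ioo i j)ᶜ) := by
    refine isChain_union.2 ⟨(Subtype.mono_coe _).isChain_image c.chain_le,
      φ.mono.isChain_range.mono (Set.image_subset_range _ _), ?_⟩
    rintro _ ⟨x, -, rfl⟩ _ ⟨l, hl, rfl⟩ -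
    rcases le_or_gt l i with hli | hil
    · exact Or.inr ((φ.mono hli).trans x.2.1)
    · exact Or.inl (x.2.2.trans (φ.mono (le_of_not_gt fun hlj => hl ⟨hil, hlj⟩)))
  obtain ⟨θ, hθ⟩ := exists_of_isChain hP hchain
  refine ⟨θ, fun l hl => ?_, fun x hx => hθ x (Or.inl ⟨x, hx, rfl⟩)⟩
  rw [← hθ _ (Or.inr ⟨l, hl, rfl⟩), face_rk_face hP]

omit hP in
theorem exists_mem_flag_Icc_eq_face {c : Flag (Set.Icc (φ.face i) (φ.face j))}
    {θ : RankedFlag n rk} (hθ : Set.EqOn θ.face φ.face (Set.Ioo i j)ᶜ)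
    (hθc : ∀ x ∈ c, θ.face (rk x.1) = x.1) {l : ℤ} (hl : l ∈ Set.Ioo i j) :
    ∃ x ∈ c, x.1 = θ.face l := by
  have hi : φ.face i = θ.face i := (hθ fun h => h.1.false).symm
  have hj : φ.face j = θ.face j := (hθ fun h => h.2.false).symm
  refine ⟨⟨θ.face l, hi.le.trans (θ.mono hl.1.le), (θ.mono hl.2.le).trans hj.ge⟩, ?_, rfl⟩
  refine Flag.mem_iff_forall_le_or_ge.2 fun x hx => ?_
  rw [← Subtype.coe_le_coe, ← Subtype.coe_le_coe, ← hθc x hx]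
  exact (le_total _ _).imp (fun h => θ.mono h) fun h => θ.mono h

theorem eqOn_compl_of_isPolytopeAdj {c d : Flag (Set.Icc (φ.face i) (φ.face j))} {m : ℤ}
    (hcd : IsPolytopeAdj (fun x => rk x.1) m c d) {θ χ : RankedFlag n rk}
    (hθ : Set.EqOn θ.face φ.face (Set.Ioo i j)ᶜ) (hθc : ∀ x ∈ c, θ.face (rk x.1) = x.1)
    (hχ : Set.EqOn χ.face φ.face (Set.Ioo i j)ᶜ) (hχd : ∀ x ∈ d, χ.face (rk x.1) = x.1) :
    Set.EqOn χ.face θ.face {m}ᶜ := by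
  intro l hlm
  by_cases hl : l ∈ Set.Ioo i j
  · by_cases hln : l < 0 ∨ n ≤ l
    · exact face_eq_of_outside hP χ θ hln
    · obtain ⟨x, hxd, hx⟩ := exists_mem_flag_Icc_eq_face hχ hχd hl
      have hrk : rk x.1 = l := by rw [hx, χ.rk_face_of_mem ⟨by omega, by omega⟩]
      have hxc : x ∈ c := (hcd.2 x (hrk.trans_ne hlm)).2 hxd
      rw [← hx, ← hθc x hxc, hrk]
  · exact (hχ hl).trans (hθ hl).symm

theorem exists_mem_parabolic_Ioo_apply_eq {ψ : RankedFlag n rk}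
    (h : Set.EqOn ψ.face φ.face (Set.Ioo i j)ᶜ) :
    ∃ w ∈ parabolic (flipPerm hP) (Set.Ioo i j), w φ = ψ := by
  rcases le_or_gt j i with hji | hij
  · refine ⟨1, one_mem _, RankedFlag.ext (funext fun l => (h fun hl => ?_).symm)⟩
    exact hji.not_gt (hl.1.trans hl.2)
  have mem_ψ {l : ℤ} (hl : l ∉ Set.Ioo i j) : φ.face l ∈ ψ.toFlag hP :=
    h hl ▸ face_mem_toFlag hP ψ l
  have hpath := hP.strongly_connected _ _ (φ.mono hij.le)
    (restrictFlagIcc (φ.toFlag hP) (face_mem_toFlag hP φ i) (face_mem_toFlag hP φ j))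
    (restrictFlagIcc (ψ.toFlag hP) (mem_ψ fun hl => hl.1.false) (mem_ψ fun hl => hl.2.false))
  have hψ : ∀ x ∈ restrictFlagIcc (ψ.toFlag hP) (mem_ψ fun hl => hl.1.false)
      (mem_ψ fun hl => hl.2.false), ψ.face (rk x.1) = x.1 := fun x hx => (mem_toFlag_iff hP).1 hx
  generalize restrictFlagIcc (ψ.toFlag hP) _ _ = e at hpath hψ
  induction hpath generalizing ψ with
  | refl =>
    refine ⟨1, one_mem _, RankedFlag.ext (funext fun l => ?_)⟩
    by_cases hl : l ∈ Set.Ioo i j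
    · obtain ⟨x, hx, hxl⟩ := exists_mem_flag_Icc_eq_face h hψ hl
      have hφx : φ.face (rk x.1) = x.1 := (mem_toFlag_iff hP).1 hx
      rw [Equiv.Perm.one_apply, ← hxl, ← hφx, hxl, face_rk_face hP]
    · exact (h hl).symm
  | @tail c d _ hcd ih =>
    obtain ⟨m, hcd⟩ := hcd
    obtain ⟨θ, hθ, hθc⟩ := exists_eqOn_of_flag_Icc hP φ i j c
    obtain ⟨w, hw, rfl⟩ := ih hθ (fun hl => hθ hl ▸ face_mem_toFlag hP θ _) hθc
    have hψθ := eqOn_compl_of_isPolytopeAdj hP hcd hθ hθc h hψ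
    by_cases hm : m ∈ Set.Ioo i j
    · rcases eq_or_eq_flip hP hψθ with rfl | rfl
      · exact ⟨w, hw, rfl⟩
      · exact ⟨flipPerm hP m * w, mul_mem (mem_parabolic hm) hw, rfl⟩
    · refine ⟨w, hw, RankedFlag.ext (funext fun l => ?_)⟩
      rcases eq_or_ne l m with rfl | hl
      · exact (hθ hm).trans (h hm).symm
      · exact (hψθ hl).symm

theorem exists_mem_parabolic_apply_eq_of_eqOn_Ici {S : Set ℤ} {i : ℤ} (hi : -1 ≤ i) {m : ℤ}
    (hmS : Set.Ioo i m ⊆ S) {ψ : RankedFlag n rk} (h : Set.EqOn ψ.face φ.face Sᶜ)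
    (hm : Set.EqOn ψ.face φ.face (Set.Ici m)) : ∃ w ∈ parabolic (flipPerm hP) S, w φ = ψ := by
  induction i, hi using Int.leInduction generalizing m φ ψ with
  | base =>
    have hIoo : Set.EqOn ψ.face φ.face (Set.Ioo (-1) m)ᶜ := fun l hl => by
      rcases lt_or_ge l 0 with hl0 | hl0
      · exact face_eq_of_outside hP ψ φ (Or.inl hl0)
      · exact hm (le_of_not_gt fun hlm => hl ⟨by omega, hlm⟩)
    obtain ⟨w, hw, hφ⟩ := exists_mem_parabolic_Ioo_apply_eq hP hIoo
    exact ⟨w, parabolic_mono hmS hw, hφ⟩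
  | succ i _ ih =>
    by_cases hiS : i + 1 ∈ S
    · refine ih (fun l hl => ?_) h hm
      rcases (Int.add_one_le_of_lt hl.1).eq_or_lt with rfl | hil
      exacts [hiS, hmS ⟨hil, hl.2⟩]
    have hsplice := h hiS
    have hlow : Set.EqOn (splice ψ φ (i + 1) hsplice).face ψ.face (Set.Iic (i + 1)) := fun l hl =>
      splice_face_of_le hsplice hl
    have hhigh : Set.EqOn (splice ψ φ (i + 1) hsplice).face φ.face (Set.Ici (i + 1)) := fun l hl =>
      splice_face_of_ge hsplice hl
    obtain ⟨w, hw, hwφ⟩ := ih (m := i + 1)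
      (fun l hl => absurd hl.1 (by have := hl.2; omega)) (fun l hl => by
        rcases le_total l (i + 1) with hli | hli
        exacts [(hlow hli).trans (h hl), hhigh hli]) hhigh
    obtain ⟨v, hv, hvψ⟩ := exists_mem_parabolic_Ioo_apply_eq hP (i := i + 1) (j := m)
      (φ := splice ψ φ (i + 1) hsplice) (ψ := ψ) fun l hl => by
        rcases le_or_gt l (i + 1) with hli | hli
        · exact (hlow hli).symm
        · exact (hm (le_of_not_gt fun hlm => hl ⟨hli, hlm⟩)).trans (hhigh hli.le).symm
    exact ⟨v * w, mul_mem (parabolic_mono hmS hv) hw, by rw [Equiv.Perm.mul_apply, hwφ, hvψ]⟩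

theorem exists_mem_parabolic_apply_eq {S : Set ℤ} {ψ : RankedFlag n rk}
    (h : Set.EqOn ψ.face φ.face Sᶜ) : ∃ w ∈ parabolic (flipPerm hP) S, w φ = ψ :=
  exists_mem_parabolic_apply_eq_of_eqOn_Ici hP hP.neg_one_le (m := n) (by simp) h fun _ hl =>
    face_eq_of_outside hP ψ φ (Or.inr hl)

end RankedFlag

/-! ### Polytopes with isomorphic regular faces -/

section RegularFaces

variable {P : Type*} [PartialOrder P] {n k : ℤ} {rk : P → ℤ} (hP : IsAbstractPolytope n rk)
include hP

theorem IsAbstractPolytope.rk_le_of_strictMono {F : P} {f : Set.Iic F → ℤ} (hf : StrictMono f)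
    (hf_ge : ∀ x, -1 ≤ f x) (x : Set.Iic F) : rk x.1 ≤ f x := by
  obtain ⟨θ, hθ⟩ := RankedFlag.exists_of_isChain hP (IsChain.singleton (a := x.1))
  suffices key : ∀ l, -1 ≤ l → l ≤ rk x.1 → ∀ y : Set.Iic F, y.1 = θ.face l → l ≤ f y from
    key _ (hP.rk_bounds x.1).1 le_rfl x (hθ x rfl).symm
  intro l hl
  induction l, hl using Int.leInduction with
  | base => exact fun _ y _ => hf_ge y
  | succ l hl ih =>
    intro hlx y hy
    have hlt : θ.face l < y.1 :=
      hy ▸ θ.face_lt_face (lt_add_one l) hl (hlx.trans (hP.rk_bounds x.1).2)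
    have hle := ih (by omega) ⟨θ.face l, hlt.le.trans y.2⟩ rfl
    exact Int.add_one_le_of_lt (hle.trans_lt (hf hlt))

theorem IsAbstractPolytope.rk_orderIso_apply {F G : P} (e : Set.Iic F ≃o Set.Iic G)
    (x : Set.Iic F) : rk (e x).1 = rk x.1 := by
  refine le_antisymm ?_ (hP.rk_le_of_strictMono (f := fun x => rk (e x).1)
    (hP.rk_strictMono.comp ((Subtype.strictMono_coe _).comp e.strictMono))
    (fun _ => (hP.rk_bounds _).1) x)
  simpa using hP.rk_le_of_strictMono (f := fun y => rk (e.symm y).1)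
    (hP.rk_strictMono.comp ((Subtype.strictMono_coe _).comp e.symm.strictMono))
    (fun _ => (hP.rk_bounds _).1) (e x)

namespace RankedFlag

omit hP in
/-- The isomorphism `e` between the sections below `F` and `G` carries the faces of `φ` of rank at
most `k` to those of `ψ`; here `F` and `G` are the faces of rank `k` of `φ` and `ψ`. -/
structure Corresponds (k : ℤ) {F G : P} (e : Set.Iic F ≃o Set.Iic G) (φ ψ : RankedFlag n rk) :
    Prop where
  left : φ.face k = F
  right : ψ.face k = G
  map : ∀ l ≤ k, ∀ x : Set.Iic F, x.1 = φ.face l → (e x).1 = ψ.face l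

variable {F G : P} {e : Set.Iic F ≃o Set.Iic G} {φ ψ : RankedFlag n rk}

theorem Corresponds.flip (h : Corresponds k e φ ψ) {l : ℤ} (hl : l < k) :
    Corresponds k e (φ.flip hP l) (ψ.flip hP l) := by
  by_cases hln : l ∈ Set.Ico 0 n; swap
  · rwa [flip_of_outside hP _ hln, flip_of_outside hP _ hln]
  refine ⟨(flip_eqOn hP φ l hl.ne').trans h.left, (flip_eqOn hP ψ l hl.ne').trans h.right,
    fun m hmk x hx => ?_⟩
  rcases eq_or_ne m l with rfl | hml; swap
  · rw [flip_eqOn hP ψ l hml]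
    exact h.map m hmk x (hx.trans (flip_eqOn hP φ l hml))
  have face_le {i : ℤ} (hi : i ≤ k) : φ.face i ≤ F := h.left ▸ φ.mono hi
  obtain ⟨hlt, hgt⟩ := face_sub_one_lt_and_lt_face_add_one hln (flip_eqOn hP φ m)
  rw [← hx] at hlt hgt
  refine eq_flip_face hP hln ?_ ?_ ?_
  · rw [← h.map (m - 1) (by omega) ⟨_, face_le (by omega)⟩ rfl]
    exact e.strictMono hlt
  · rw [← h.map (m + 1) hl ⟨_, face_le hl⟩ rfl]
    exact e.strictMono hgt
  · rw [← h.map m hmk ⟨_, face_le hmk⟩ rfl, ne_eq, Subtype.coe_inj, e.injective.eq_iff,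
      ← Subtype.coe_inj, hx]
    exact flip_face_ne hP φ hln

theorem corresponds_apply_iff {w : Equiv.Perm (RankedFlag n rk)}
    (hw : w ∈ parabolic (flipPerm hP) (Set.Iio k)) :
    Corresponds k e (w φ) (w ψ) ↔ Corresponds k e φ ψ := by
  induction hw using Subgroup.closure_induction generalizing φ ψ with
  | mem _ hx =>
    obtain ⟨l, hl, rfl⟩ := hx
    simp only [flipPerm_apply]
    refine ⟨fun h => ?_, fun h => h.flip hP hl⟩
    simpa only [flip_flip] using h.flip hP hl
  | one => rfl
  | mul x y _ _ hx hy => exact hx.trans hy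
  | inv x _ hx => simpa using (hx (φ := x⁻¹ φ) (ψ := x⁻¹ ψ)).symm

variable {K : Type*} [PartialOrder K] (hK : IsRegularPolytope (P := K))
include hK

theorem exists_corresponds (i₁ : Set.Iic (φ.face k) ≃o K) (i₂ : Set.Iic (ψ.face k) ≃o K) :
    ∃ e : Set.Iic (φ.face k) ≃o Set.Iic (ψ.face k), Corresponds k e φ ψ := by
  let c := restrictFlagIic (φ.toFlag hP) (face_mem_toFlag hP φ k)
  let d := restrictFlagIic (ψ.toFlag hP) (face_mem_toFlag hP ψ k)
  obtain ⟨α, hα⟩ := hK (Flag.map i₁ c) (Flag.map i₂ d)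
  rw [Flag.coe_map, Flag.coe_map] at hα
  let e := (i₁.trans α).trans i₂.symm
  refine ⟨e, rfl, rfl, fun l _ x hx => ?_⟩
  have hxc : x ∈ c := (mem_toFlag_iff hP).2 (by rw [hx, face_rk_face hP])
  have hxd : e x ∈ d := by
    obtain ⟨y, hyd, hyx⟩ := hα.subset ⟨i₁ x, ⟨x, hxc, rfl⟩, rfl⟩
    rwa [show e x = y from (OrderIso.symm_apply_eq i₂).2 hyx.symm]
  rw [← (mem_toFlag_iff hP).1 hxd, hP.rk_orderIso_apply, hx, face_rk_face hP]

variable (hk : -1 ≤ k) (hkn : k ≤ n) (hfaces : ∀ F : P, rk F = k → Nonempty (Set.Iic F ≃o K))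
include hk hkn hfaces

theorem eq_one_of_mem_parabolic_Iio {w : Equiv.Perm (RankedFlag n rk)}
    (hw : w ∈ parabolic (flipPerm hP) (Set.Iio k)) (hwφ : w φ = φ) : w = 1 := by
  ext ψ l
  rw [Equiv.Perm.one_apply]
  rcases lt_or_ge l k with hlk | hkl
  · obtain ⟨i₁⟩ := hfaces _ (φ.rk_face_of_mem ⟨hk, hkn⟩)
    obtain ⟨i₂⟩ := hfaces _ (ψ.rk_face_of_mem ⟨hk, hkn⟩)
    obtain ⟨e, he⟩ := exists_corresponds hP hK i₁ i₂
    have hew : Corresponds k e φ (w ψ) := by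
      simpa only [hwφ] using (corresponds_apply_iff hP hw).2 he
    let x : Set.Iic (φ.face k) := ⟨φ.face l, φ.mono hlk.le⟩
    rw [← he.map l hlk.le x rfl, ← hew.map l hlk.le x rfl]
  · exact eqOn_apply_of_mem_parabolic hP hw ψ hkl.not_gt

theorem parabolic_flipPerm_inf_le {S T : Set ℤ} (hS : S ⊆ Set.Iio k) (φ : RankedFlag n rk) :
    parabolic (flipPerm hP) S ⊓ parabolic (flipPerm hP) T ≤ parabolic (flipPerm hP) (S ∩ T) := by
  rintro w ⟨hwS, hwT⟩
  have hwφ : Set.EqOn (w φ).face φ.face (S ∩ T)ᶜ := by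
    rw [Set.compl_inter]
    exact (eqOn_apply_of_mem_parabolic hP hwS φ).union (eqOn_apply_of_mem_parabolic hP hwT φ)
  obtain ⟨v, hv, hvφ⟩ := exists_mem_parabolic_apply_eq hP hwφ
  have hvw : v⁻¹ * w = 1 := by
    refine eq_one_of_mem_parabolic_Iio hP hK hk hkn hfaces (φ := φ) (mul_mem (inv_mem ?_) ?_) ?_
    · exact parabolic_mono (Set.inter_subset_left.trans hS) hv
    · exact parabolic_mono hS hwS
    · rw [Equiv.Perm.mul_apply, Equiv.Perm.inv_eq_iff_eq, hvφ]
  rwa [← inv_mul_eq_one.1 hvw]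

end RankedFlag

end RegularFaces

/-! ### The coset geometry of a string C-group -/

/-- The faces of the coset geometry of a string C-group: a face of rank `j` is a left coset of the
subgroup generated by all `r i` with `i ≠ j`. -/
structure CosetFace {G : Type*} [Group G] {n : ℤ} {r : ℤ → G} (hr : IsStringCGroup_s2 n r) where
  rk : ℤ
  rk_mem : rk ∈ Set.Icc (-1) n
  coset : G ⧸ parabolic r {rk}ᶜ

namespace CosetFace

variable {G : Type*} [Group G] {n : ℤ} {r : ℤ → G} {hr : IsStringCGroup_s2 n r}
  {x y z : CosetFace hr} {g h : G}

instance : Membership G (CosetFace hr) := ⟨fun x g => (g : G ⧸ parabolic r {x.rk}ᶜ) = x.coset⟩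

variable (hr) in
/-- The face of rank `j` that contains `g`. -/
def of (g : G) {j : ℤ} (hj : j ∈ Set.Icc (-1) n) : CosetFace hr := ⟨j, hj, g⟩

theorem mem_of (g : G) {j : ℤ} (hj : j ∈ Set.Icc (-1) n) : g ∈ of hr g hj := rfl

theorem exists_mem (x : CosetFace hr) : ∃ g, g ∈ x := QuotientGroup.mk_surjective x.coset

theorem mem_iff_of_mem (hg : g ∈ x) : h ∈ x ↔ g⁻¹ * h ∈ parabolic r {x.rk}ᶜ := by
  rw [← QuotientGroup.eq, show (g : G ⧸ parabolic r {x.rk}ᶜ) = x.coset from hg]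
  exact eq_comm

theorem eq_of_mem (hrk : x.rk = y.rk) (hx : g ∈ x) (hy : g ∈ y) : x = y := by
  obtain ⟨j, hj, a⟩ := x
  obtain ⟨_, _, b⟩ := y
  obtain rfl : j = _ := hrk
  obtain rfl : a = b := hx.symm.trans hy
  rfl

theorem mul_mem_iff {S : Set ℤ} {a : G} (ha : a ∈ parabolic r S) (hS : x.rk ∉ S) :
    g * a ∈ x ↔ g ∈ x := by
  have hax : a ∈ parabolic r {x.rk}ᶜ := parabolic_mono (Set.subset_compl_singleton_iff.2 hS) ha
  exact Eq.congr_left (QuotientGroup.mk_mul_of_mem g hax)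

theorem mem_of_outside (hx : x.rk < 0 ∨ n ≤ x.rk) (g : G) : g ∈ x := by
  obtain ⟨h, hh⟩ := x.exists_mem
  rw [mem_iff_of_mem hh]
  have hle : parabolic r Set.univ ≤ parabolic r {x.rk}ᶜ := parabolic_le fun i _ => by
    by_cases hi : i = x.rk
    · rw [hi, hr.eq_one _ hx]
      exact one_mem _
    · exact mem_parabolic hi
  exact hle (hr.generates ▸ Subgroup.mem_top _)

theorem exists_common (hg : g ∈ y) (hh : h ∈ y) :
    ∃ u, (∀ x : CosetFace hr, x.rk ≤ y.rk → g ∈ x → u ∈ x) ∧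
      ∀ z : CosetFace hr, y.rk ≤ z.rk → h ∈ z → u ∈ z := by
  obtain ⟨a, ha, b, hb, hab⟩ := hr.exists_mul_eq_of_mem_parabolic_compl ((mem_iff_of_mem hh).1 hg)
  have hu : h * a = g * b⁻¹ := by
    rw [eq_mul_inv_iff_mul_eq, mul_assoc, hab, mul_inv_cancel_left]
  refine ⟨h * a, fun x hx hgx => ?_, fun z hz => (mul_mem_iff ha hz.not_gt).2⟩
  rw [hu]
  exact (mul_mem_iff (inv_mem hb) hx.not_gt).2 hgx

/-- Two faces are incident if, as cosets, they have a common element. -/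
instance : PartialOrder (CosetFace hr) where
  le x y := x.rk ≤ y.rk ∧ ∃ g, g ∈ x ∧ g ∈ y
  le_refl x := ⟨le_rfl, x.exists_mem.imp fun _ hg => ⟨hg, hg⟩⟩
  le_trans x y z := by
    rintro ⟨hxy, g, hgx, hgy⟩ ⟨hyz, h, hhy, hhz⟩
    obtain ⟨u, hux, huz⟩ := exists_common hgy hhy
    exact ⟨hxy.trans hyz, u, hux x hxy hgx, huz z hyz hhz⟩
  le_antisymm x y := fun ⟨hxy, g, hgx, hgy⟩ ⟨hyx, _⟩ => eq_of_mem (hxy.antisymm hyx) hgx hgy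

theorem le_iff : x ≤ y ↔ x.rk ≤ y.rk ∧ ∃ g, g ∈ x ∧ g ∈ y := Iff.rfl

theorem le_of_mem (hrk : x.rk ≤ y.rk) (hx : g ∈ x) (hy : g ∈ y) : x ≤ y := ⟨hrk, g, hx, hy⟩

theorem eq_of_le_of_rk_eq (hxy : x ≤ y) (hrk : x.rk = y.rk) : x = y := by
  obtain ⟨-, g, hgx, hgy⟩ := hxy
  exact eq_of_mem hrk hgx hgy

theorem rk_lt_rk (hxy : x < y) : x.rk < y.rk :=
  hxy.le.1.lt_of_ne fun hrk => hxy.ne (eq_of_le_of_rk_eq hxy.le hrk)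

theorem lt_of_mem (hrk : x.rk < y.rk) (hx : g ∈ x) (hy : g ∈ y) : x < y :=
  (le_of_mem hrk.le hx hy).lt_of_ne fun hxy => hrk.ne (congrArg rk hxy)

instance [Finite G] : Finite (CosetFace hr) := by
  refine Finite.of_surjective (fun p : Set.Icc (-1) n × G => of hr p.2 p.1.2) fun x => ?_
  obtain ⟨g, hg⟩ := x.exists_mem
  exact ⟨(⟨x.rk, x.rk_mem⟩, g), eq_of_mem rfl (mem_of g x.rk_mem) hg⟩

theorem le_of_isChain {s : Set (CosetFace hr)} (hs : IsChain (· ≤ ·) s) (hx : x ∈ s) (hy : y ∈ s)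
    (hrk : x.rk ≤ y.rk) : x ≤ y :=
  (hs.total hx hy).elim id fun hyx => (eq_of_le_of_rk_eq hyx (hyx.1.antisymm hrk)).ge

theorem exists_mem_forall_mem_of_isChain {s : Set (CosetFace hr)} (hs : IsChain (· ≤ ·) s)
    (hy : ∀ x ∈ s, x ≤ y) : ∃ g ∈ y, ∀ x ∈ s, g ∈ x := by
  suffices key : ∀ j, -2 ≤ j → ∀ y : CosetFace hr, (∀ x ∈ s, x.rk ≤ j → x ≤ y) →
      ∃ g ∈ y, ∀ x ∈ s, x.rk ≤ j → g ∈ x by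
    obtain ⟨g, hgy, hg⟩ := key y.rk (by linarith [y.rk_mem.1]) y fun x hx _ => hy x hx
    exact ⟨g, hgy, fun x hx => hg x hx (hy x hx).1⟩
  intro j hj
  induction j, hj using Int.leInduction with
  | base =>
    refine fun y _ => y.exists_mem.imp fun g hg => ⟨hg, fun x _ hx => ?_⟩
    linarith [x.rk_mem.1]
  | succ j _ ih =>
    intro y hy
    by_cases ha : ∃ a ∈ s, a.rk = j + 1
    · obtain ⟨a, ha, haj⟩ := ha
      obtain ⟨g, hga, hg⟩ := ih a fun x hx hxj => le_of_isChain hs hx ha (by omega)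
      obtain ⟨hay, h, hha, hhy⟩ := hy a ha haj.le
      obtain ⟨u, hu_le, hu_ge⟩ := exists_common hga hha
      refine ⟨u, hu_ge y hay hhy, fun x hx hxj => hu_le x (hxj.trans haj.ge) ?_⟩
      rcases hxj.lt_or_eq with hlt | heq
      · exact hg x hx (Int.lt_add_one_iff.1 hlt)
      · rwa [eq_of_le_of_rk_eq (le_of_isChain hs hx ha (by omega)) (heq.trans haj.symm)]
    · push Not at ha
      obtain ⟨g, hgy, hg⟩ := ih y fun x hx hxj => hy x hx (by omega)
      exact ⟨g, hgy, fun x hx hxj => hg x hx (Int.lt_add_one_iff.1 (hxj.lt_of_ne (ha x hx)))⟩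

variable (hr) in
/-- The flag of all faces that contain `g`. -/
def flag (g : G) : Flag (CosetFace hr) where
  carrier := {x | g ∈ x}
  Chain' x hx y hy _ := (le_total x.rk y.rk).imp (le_of_mem · hx hy) (le_of_mem · hy hx)
  max_chain' := by
    refine fun s hs hgs => hgs.antisymm fun x hx => ?_
    have hgx : of hr g x.rk_mem ∈ s := hgs (mem_of g x.rk_mem)
    have hx_eq : x = of hr g x.rk_mem :=
      eq_of_le_of_rk_eq (le_of_isChain hs hx hgx (le_refl x.rk)) rfl
    rw [hx_eq]
    exact mem_of g x.rk_mem

theorem exists_flag_eq (hn : -1 ≤ n) (c : Flag (CosetFace hr)) : ∃ g, flag hr g = c := by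
  obtain ⟨g, -, hg⟩ := exists_mem_forall_mem_of_isChain c.chain_le (y := of hr 1 ⟨hn, le_rfl⟩)
    fun x _ => le_iff.2 ⟨x.rk_mem.2, x.exists_mem.imp fun g hg =>
      ⟨hg, mem_of_outside (Or.inr le_rfl) g⟩⟩
  exact ⟨g, (Flag.ext (c.max_chain' (flag hr g).chain_le hg)).symm⟩

theorem inv_mul_mem_parabolic_compl_pair (hgx : g ∈ x) (hgy : g ∈ y) (hhx : h ∈ x) (hhy : h ∈ y) :
    g⁻¹ * h ∈ parabolic r {x.rk, y.rk}ᶜ :=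
  hr.inf_le _ _ ⟨(mem_iff_of_mem hgx).1 hhx, (mem_iff_of_mem hgy).1 hhy⟩

theorem mem_or_mul_mem_of_lt (hxy : x < y) (hyz : y < z) (hrk : z.rk = x.rk + 2) (hgx : g ∈ x)
    (hgz : g ∈ z) : g ∈ y ∨ g * r y.rk ∈ y := by
  have hxy' := rk_lt_rk hxy
  have hyz' := rk_lt_rk hyz
  obtain ⟨-, u₁, hu₁x, hu₁y⟩ := hxy.le
  obtain ⟨-, u₂, hu₂y, hu₂z⟩ := hyz.le
  obtain ⟨u, hu_le, hu_ge⟩ := exists_common hu₁y hu₂y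
  have hu := inv_mul_mem_parabolic_compl_pair hgx hgz (hu_le x hxy'.le hu₁x)
    (hu_ge z hyz'.le hu₂z)
  have hset : ({x.rk, z.rk}ᶜ : Set ℤ) = {y.rk} ∪ (Set.Iio x.rk ∪ Set.Ioi z.rk) := by
    ext l
    simp only [Set.mem_compl_iff, Set.mem_insert_iff, Set.mem_singleton_iff, Set.mem_union,
      Set.mem_Iio, Set.mem_Ioi]
    omega
  rw [hset] at hu
  obtain ⟨b, hb, a, ha, hba⟩ := exists_mul_eq_of_mem_parabolic_union (fun i hi l hl => by
    simp only [Set.mem_singleton_iff, Set.mem_union, Set.mem_Iio, Set.mem_Ioi] at hi hl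
    rcases hl with hl | hl
    · exact (hr.commute l i (by omega)).symm
    · exact hr.commute i l (by omega)) hu
  have hgb : g * b ∈ y := by
    rw [← mul_mem_iff ha (by simp only [Set.mem_union, Set.mem_Iio, Set.mem_Ioi]; omega),
      mul_assoc, hba, mul_inv_cancel_left]
    exact hu_le y le_rfl hu₁y
  rcases eq_one_or_eq_of_mem_parabolic_singleton (hr.mul_self _) hb with rfl | rfl
  · exact Or.inl (mul_one g ▸ hgb)
  · exact Or.inr hgb

theorem of_ne_of_mul (g : G) {j : ℤ} (hj : j ∈ Set.Ico 0 n) (hj' : j ∈ Set.Icc (-1) n) :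
    of hr g hj' ≠ of hr (g * r j) hj' := by
  intro heq
  have hmem : g * r j ∈ of hr g hj' := heq ▸ mem_of (g * r j) hj'
  rw [mem_iff_of_mem (mem_of g hj'), inv_mul_cancel_left] at hmem
  exact hr.notMem j hj.1 hj.2 hmem

theorem exists_lt_and_lt_iff_eq_or_eq (hxz : x < z) (hrk : z.rk = x.rk + 2) :
    ∃ y₁ y₂ : CosetFace hr, y₁ ≠ y₂ ∧ ∀ y, x < y ∧ y < z ↔ y = y₁ ∨ y = y₂ := by
  obtain ⟨-, g, hgx, hgz⟩ := hxz.le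
  have hx := x.rk_mem
  have hz := z.rk_mem
  rw [Set.mem_Icc] at hx hz
  have hj : x.rk + 1 ∈ Set.Icc (-1) n := ⟨by omega, by omega⟩
  have hmul {y : CosetFace hr} (hy : y.rk ≠ x.rk + 1) : g * r (x.rk + 1) ∈ y ↔ g ∈ y :=
    mul_mem_iff (mem_parabolic (Set.mem_singleton _)) hy
  refine ⟨of hr g hj, of hr (g * r (x.rk + 1)) hj, of_ne_of_mul g ⟨by omega, by omega⟩ hj,
    fun y => ⟨fun ⟨hxy, hyz⟩ => ?_, ?_⟩⟩
  · have hy : y.rk = x.rk + 1 := by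
      have := rk_lt_rk hxy
      have := rk_lt_rk hyz
      omega
    have hgy := mem_or_mul_mem_of_lt hxy hyz hrk hgx hgz
    rw [hy] at hgy
    exact hgy.imp (eq_of_mem hy · (mem_of g hj)) (eq_of_mem hy · (mem_of _ hj))
  · have between {h : G} (hhx : h ∈ x) (hhz : h ∈ z) : x < of hr h hj ∧ of hr h hj < z :=
      ⟨lt_of_mem (lt_add_one x.rk) hhx (mem_of h hj),
        lt_of_mem (show x.rk + 1 < z.rk by omega) (mem_of h hj) hhz⟩
    rintro (rfl | rfl)
    · exact between hgx hgz
    · exact between ((hmul (by omega)).2 hgx) ((hmul (by omega)).2 hgz)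

theorem reflTransGen_isPolytopeAdj_flag_mul {w : G} (hw : w ∈ parabolic r {x.rk, y.rk}ᶜ)
    (hgx : g ∈ x) (hgy : g ∈ y) (hgwx : g * w ∈ x) (hgwy : g * w ∈ y) :
    Relation.ReflTransGen
      (fun c d => ∃ j, IsPolytopeAdj (fun z : Set.Icc x y => z.1.rk) j c d)
      (restrictFlagIcc (flag hr g) hgx hgy) (restrictFlagIcc (flag hr (g * w)) hgwx hgwy) := by
  induction hw using Subgroup.closure_induction generalizing g with
  | mem _ hl =>
    obtain ⟨l, -, rfl⟩ := hl
    by_cases heq : restrictFlagIcc (flag hr g) hgx hgy =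
        restrictFlagIcc (flag hr (g * r l)) hgwx hgwy
    · rw [heq]
    · exact .single ⟨l, heq, fun z hz =>
        (mul_mem_iff (mem_parabolic (Set.mem_singleton l)) hz).symm⟩
  | one => simp only [mul_one, Relation.ReflTransGen.refl]
  | mul a b ha _ iha ihb =>
    have hgax : g * a ∈ x := (mul_mem_iff ha (by simp)).2 hgx
    have hgay : g * a ∈ y := (mul_mem_iff ha (by simp)).2 hgy
    simp only [← mul_assoc] at hgwx hgwy ⊢
    exact (iha hgx hgy hgax hgay).trans (ihb hgax hgay hgwx hgwy)
  | inv a _ ih =>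
    have hback := ih hgwx hgwy (by rwa [inv_mul_cancel_right]) (by rwa [inv_mul_cancel_right])
    simp only [inv_mul_cancel_right] at hback
    exact Relation.ReflTransGen.mono (fun _ _ => Exists.imp fun _ => IsPolytopeAdj.symm) _ _
      (Relation.ReflTransGen.swap _ _ hback)

theorem isAbstractPolytope (hr : IsStringCGroup_s2 n r) (hn : -1 ≤ n) :
    IsAbstractPolytope n (rk : CosetFace hr → ℤ) where
  neg_one_le := hn
  strictMono := rk_lt_rk
  rank_range := Set.Subset.antisymm (Set.range_subset_iff.2 rk_mem) fun _ hj => ⟨of hr 1 hj, rfl⟩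
  exists_bot := ⟨of hr 1 ⟨le_rfl, hn⟩, fun x => le_iff.2 ⟨x.rk_mem.1,
    x.exists_mem.imp fun g hg => ⟨mem_of_outside (Or.inl neg_one_lt_zero) g, hg⟩⟩⟩
  exists_top := ⟨of hr 1 ⟨hn, le_rfl⟩, fun x => le_iff.2 ⟨x.rk_mem.2,
    x.exists_mem.imp fun g hg => ⟨hg, mem_of_outside (Or.inr le_rfl) g⟩⟩⟩
  diamond _ _ := exists_lt_and_lt_iff_eq_or_eq
  strongly_connected x y hxy c d := by
    have exists_eq (c : Flag (Set.Icc x y)) :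
        ∃ g, ∃ (hx : g ∈ x) (hy : g ∈ y), c = restrictFlagIcc (flag hr g) hx hy := by
      obtain ⟨d, hxd, hyd, hcd⟩ := exists_flag_mem_iff_of_flag_Icc hxy c
      obtain ⟨g, rfl⟩ := exists_flag_eq hn d
      exact ⟨g, hxd, hyd, Flag.ext (Set.ext hcd)⟩
    obtain ⟨g, hgx, hgy, rfl⟩ := exists_eq c
    obtain ⟨h, hhx, hhy, rfl⟩ := exists_eq d
    have hpath := reflTransGen_isPolytopeAdj_flag_mul
      (inv_mul_mem_parabolic_compl_pair hgx hgy hhx hhy) hgx hgy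
      (by rwa [mul_inv_cancel_left]) (by rwa [mul_inv_cancel_left])
    simpa only [mul_inv_cancel_left] using hpath

theorem isPolytopeAdj_flag_iff (hn : -1 ≤ n) {j : ℤ} {d : Flag (CosetFace hr)} :
    IsPolytopeAdj rk j (flag hr g) d ↔ j ∈ Set.Ico 0 n ∧ d = flag hr (g * r j) := by
  have hR := isAbstractPolytope hr hn
  have hadj (hj : j ∈ Set.Ico 0 n) :
      IsPolytopeAdj rk j (flag hr g) (flag hr (g * r j)) := by
    refine ⟨fun heq => ?_, fun z hz => (mul_mem_iff (mem_parabolic (Set.mem_singleton j)) hz).symm⟩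
    have hj' : j ∈ Set.Icc (-1) n := ⟨by linarith [hj.1], hj.2.le⟩
    have hmem : of hr g hj' ∈ flag hr (g * r j) := heq ▸ mem_of g hj'
    exact of_ne_of_mul g hj hj' (eq_of_mem rfl hmem (mem_of _ hj'))
  refine ⟨fun hd => ?_, fun ⟨hj, hd⟩ => hd ▸ hadj hj⟩
  obtain ⟨θ, hθ⟩ := RankedFlag.exists_toFlag_eq hR (flag hr g)
  obtain ⟨χ, hχ⟩ := RankedFlag.exists_toFlag_eq hR (flag hr (g * r j))
  obtain ⟨ψ, rfl⟩ := RankedFlag.exists_toFlag_eq hR d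
  rw [← hθ, RankedFlag.isPolytopeAdj_toFlag_iff] at hd
  refine ⟨hd.1, ?_⟩
  have hgr := hadj hd.1
  rw [← hθ, ← hχ, RankedFlag.isPolytopeAdj_toFlag_iff] at hgr
  rw [← hχ, hd.2, hgr.2]

instance : MulAction G (CosetFace hr) where
  smul u x := ⟨x.rk, x.rk_mem, u • x.coset⟩
  one_smul x := congrArg (CosetFace.mk x.rk x.rk_mem) (one_smul G x.coset)
  mul_smul u v x := congrArg (CosetFace.mk x.rk x.rk_mem) (mul_smul u v x.coset)

theorem mem_smul_iff {u : G} : g ∈ u • x ↔ u⁻¹ * g ∈ x :=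
  (inv_smul_eq_iff (g := u) (a := (g : G ⧸ parabolic r {x.rk}ᶜ))).symm

/-- Left translation by `u`, as an automorphism of the coset geometry. -/
def translate (u : G) : CosetFace hr ≃o CosetFace hr where
  toEquiv := MulAction.toPerm u
  map_rel_iff' {x y} := by
    refine and_congr Iff.rfl
      ⟨fun ⟨g, hgx, hgy⟩ => ⟨u⁻¹ * g, mem_smul_iff.1 hgx, mem_smul_iff.1 hgy⟩,
        fun ⟨g, hgx, hgy⟩ => ⟨u * g, mem_smul_iff.2 ?_, mem_smul_iff.2 ?_⟩⟩ <;>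
    rwa [inv_mul_cancel_left]

theorem isRegularPolytope (hr : IsStringCGroup_s2 n r) (hn : -1 ≤ n) :
    IsRegularPolytope (P := CosetFace hr) := by
  intro c d
  obtain ⟨g, rfl⟩ := exists_flag_eq hn c
  obtain ⟨h, rfl⟩ := exists_flag_eq hn d
  refine ⟨translate (h * g⁻¹), ?_⟩
  ext x
  rw [(translate (h * g⁻¹)).image_eq_preimage_symm]
  change g ∈ (h * g⁻¹)⁻¹ • x ↔ h ∈ x
  rw [mem_smul_iff, inv_inv, inv_mul_cancel_right]

end CosetFace

/-! ### Coverings by coset geometries -/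

namespace CosetFace

variable {P : Type*} [PartialOrder P] {n : ℤ} {rk : P → ℤ} {G : Type*} [Group G] {r : ℤ → G}
  {hr : IsStringCGroup_s2 n r} (π : G →* Equiv.Perm (RankedFlag n rk)) (φ : RankedFlag n rk)

/-- The face of `P` below a face of the coset geometry: if `G` acts on the flags of `P` through `π`
and `φ` is a base flag, then the chambers `g` correspond to the flags `π g⁻¹ φ`. -/
noncomputable def proj (x : CosetFace hr) : P := (π x.exists_mem.choose⁻¹ φ).face x.rk

variable {π φ} {x y z : CosetFace hr} {g h : G} (hP : IsAbstractPolytope n rk)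
  (hπ : ∀ l, π (r l) = RankedFlag.flipPerm hP l)
include hπ

theorem map_parabolic_eq (S : Set ℤ) :
    (parabolic r S).map π = parabolic (RankedFlag.flipPerm hP) S := by
  rw [map_parabolic, funext hπ]

theorem eqOn_map_mul_inv_apply {S : Set ℤ} {a : G} (ha : a ∈ parabolic r S) (g : G) :
    Set.EqOn (π (g * a)⁻¹ φ).face (π g⁻¹ φ).face Sᶜ := by
  rw [mul_inv_rev, map_mul]
  refine RankedFlag.eqOn_apply_of_mem_parabolic hP ?_ (π g⁻¹ φ)
  rw [← map_parabolic_eq hP hπ]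
  exact Subgroup.mem_map_of_mem π (inv_mem ha)

theorem exists_mem_parabolic_map_mul_inv_apply_eq {S : Set ℤ} {ψ : RankedFlag n rk}
    (hψ : Set.EqOn ψ.face (π g⁻¹ φ).face Sᶜ) : ∃ a ∈ parabolic r S, π (g * a)⁻¹ φ = ψ := by
  obtain ⟨w, hw, hwψ⟩ := RankedFlag.exists_mem_parabolic_apply_eq hP hψ
  rw [← map_parabolic_eq hP hπ] at hw
  obtain ⟨a, ha, rfl⟩ := hw
  refine ⟨a⁻¹, inv_mem ha, ?_⟩
  rw [mul_inv_rev, inv_inv, map_mul, Equiv.Perm.mul_apply, hwψ]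

theorem proj_eq_face (hg : g ∈ x) : proj π φ x = (π g⁻¹ φ).face x.rk := by
  have ha := (mem_iff_of_mem hg).1 x.exists_mem.choose_spec
  have heq := eqOn_map_mul_inv_apply hP hπ (φ := φ) ha g (Set.notMem_compl_iff.2 rfl)
  rwa [mul_inv_cancel_left] at heq

omit hπ in
theorem rk_proj (x : CosetFace hr) : rk (proj π φ x) = x.rk :=
  RankedFlag.rk_face_of_mem _ x.rk_mem

theorem proj_mono : Monotone (proj π φ : CosetFace hr → P) := by
  rintro x y ⟨hxy, g, hgx, hgy⟩
  rw [proj_eq_face hP hπ hgx, proj_eq_face hP hπ hgy]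
  exact (π g⁻¹ φ).mono hxy

theorem proj_image_flag (g : G) :
    proj π φ '' (flag hr g : Set (CosetFace hr)) = ((π g⁻¹ φ).toFlag hP : Set P) := by
  ext p
  constructor
  · rintro ⟨x, hx, rfl⟩
    rw [proj_eq_face hP hπ hx]
    exact RankedFlag.face_mem_toFlag hP _ _
  · intro hp
    have hg := mem_of (hr := hr) g (hP.rk_bounds p)
    exact ⟨of hr g (hP.rk_bounds p), hg,
      (proj_eq_face hP hπ hg).trans ((RankedFlag.mem_toFlag_iff hP).1 hp)⟩

theorem isPolytopeCovering_proj :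
    IsPolytopeCovering CosetFace.rk rk (proj π φ : CosetFace hr → P) := by
  refine ⟨proj_mono hP hπ, rk_proj, fun c => ?_, fun j c d c' d' hc hd hcd => ?_⟩
  · obtain ⟨g, rfl⟩ := exists_flag_eq hP.neg_one_le c
    exact ⟨_, proj_image_flag hP hπ g⟩
  · obtain ⟨g, rfl⟩ := exists_flag_eq hP.neg_one_le c
    obtain ⟨hj, rfl⟩ := (isPolytopeAdj_flag_iff hP.neg_one_le).1 hcd
    rw [proj_image_flag hP hπ] at hc hd
    rw [← SetLike.coe_injective hc, ← SetLike.coe_injective hd,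
      RankedFlag.isPolytopeAdj_toFlag_iff]
    refine ⟨hj, ?_⟩
    rw [mul_inv_rev, map_mul, map_inv, hπ, ← RankedFlag.flipPerm_apply, Equiv.Perm.mul_apply,
      Equiv.Perm.inv_eq_iff_eq]
    exact (RankedFlag.flip_flip hP _ j).symm

theorem exists_mem_face_eq_of_le_proj {p q : P} (hpq : p ≤ q) (hq : q ≤ proj π φ x) :
    ∃ g ∈ x, (π g⁻¹ φ).face (rk p) = p ∧ (π g⁻¹ φ).face (rk q) = q := by
  obtain ⟨g, hg⟩ := x.exists_mem
  rw [proj_eq_face hP hπ hg] at hq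
  have hchain : IsChain (· ≤ ·) (insert p (insert q ((π g⁻¹ φ).face '' Set.Ici x.rk))) := by
    have hle : ∀ y ∈ (π g⁻¹ φ).face '' Set.Ici x.rk, q ≤ y :=
      Set.forall_mem_image.2 fun l hl => hq.trans ((π g⁻¹ φ).mono hl)
    refine (IsChain.insert ?_ fun y hy _ => Or.inl (hle y hy)).insert fun y hy _ => Or.inl ?_
    · exact (π g⁻¹ φ).mono.isChain_range.mono (Set.image_subset_range _ _)
    · exact hy.elim (fun h => h ▸ hpq) fun h => hpq.trans (hle y h)
  obtain ⟨ψ, hψ⟩ := RankedFlag.exists_of_isChain hP hchain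
  obtain ⟨a, ha, haψ⟩ := exists_mem_parabolic_map_mul_inv_apply_eq hP hπ (S := Set.Iio x.rk)
    (ψ := ψ) (g := g) (φ := φ) fun l hl => by
      have := hψ _ (Or.inr (Or.inr ⟨l, Set.notMem_Iio.1 hl, rfl⟩))
      rwa [RankedFlag.face_rk_face hP] at this
  refine ⟨g * a, (mul_mem_iff ha Set.self_notMem_Iio).2 hg, ?_⟩
  rw [haψ]
  exact ⟨hψ p (Or.inl rfl), hψ q (Or.inr (Or.inl rfl))⟩

section Free

variable (hfree : ∀ a ∈ parabolic r (Set.Iio x.rk), ∀ ψ, π a ψ = ψ → a = 1)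
include hfree

theorem mem_parabolic_compl_of_face_eq {a : G} (ha : a ∈ parabolic r (Set.Iio x.rk)) {j : ℤ}
    (hj : (π (g * a)⁻¹ φ).face j = (π g⁻¹ φ).face j) : a ∈ parabolic r {j}ᶜ := by
  have heq : Set.EqOn (π (g * a)⁻¹ φ).face (π g⁻¹ φ).face (Set.Iio x.rk ∩ {j}ᶜ)ᶜ := by
    rw [Set.compl_inter, compl_compl]
    exact (eqOn_map_mul_inv_apply hP hπ ha g).union (Set.eqOn_singleton.2 hj)
  obtain ⟨b, hb, hba⟩ := exists_mem_parabolic_map_mul_inv_apply_eq hP hπ heq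
  have hab : a * b⁻¹ = 1 := by
    refine hfree _ (mul_mem ha (inv_mem (parabolic_mono Set.inter_subset_left hb))) (π g⁻¹ φ) ?_
    simp only [mul_inv_rev, map_mul, Equiv.Perm.mul_apply] at hba ⊢
    rw [hba, ← Equiv.Perm.mul_apply, ← map_mul, mul_inv_cancel, map_one, Equiv.Perm.one_apply]
  rw [mul_inv_eq_one.1 hab]
  exact parabolic_mono Set.inter_subset_right hb

theorem mem_of_face_eq_proj (hzx : z ≤ x) (hh : h ∈ x)
    (hz : (π h⁻¹ φ).face z.rk = proj π φ z) : h ∈ z := by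
  obtain ⟨hrk, g, hgz, hgx⟩ := hzx
  obtain ⟨a, ha, b, hb, hab⟩ := hr.exists_mul_eq_of_mem_parabolic_compl ((mem_iff_of_mem hgx).1 hh)
  have hga : g * a = h * b⁻¹ := by
    rw [eq_mul_inv_iff_mul_eq, mul_assoc, hab, mul_inv_cancel_left]
  rw [← mul_mem_iff (inv_mem hb) hrk.not_gt, ← hga, mem_iff_of_mem hgz, inv_mul_cancel_left]
  refine mem_parabolic_compl_of_face_eq hP hπ hfree (g := g) (φ := φ) ha ?_
  rw [hga, eqOn_map_mul_inv_apply hP hπ (inv_mem hb) h hrk.not_gt, hz, proj_eq_face hP hπ hgz]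

theorem nonempty_orderIso_Iic_proj : Nonempty (Set.Iic x ≃o Set.Iic (proj π φ x)) := by
  let f (y : Set.Iic x) : Set.Iic (proj π φ x) := ⟨proj π φ y.1, proj_mono hP hπ y.2⟩
  have hf_le (y z : Set.Iic x) : f y ≤ f z ↔ y ≤ z := by
    refine ⟨fun hyz => ?_, fun hyz => proj_mono hP hπ hyz⟩
    obtain ⟨g, hgx, hgy, hgz⟩ := exists_mem_face_eq_of_le_proj hP hπ
      (Subtype.coe_le_coe.2 hyz) (f z).2
    rw [rk_proj (π := π)] at hgy hgz
    refine le_of_mem ?_ (mem_of_face_eq_proj hP hπ hfree y.2 hgx hgy)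
      (mem_of_face_eq_proj hP hπ hfree z.2 hgx hgz)
    simpa only [f, rk_proj (π := π)] using hP.rk_mono hyz
  refine ⟨RelIso.ofSurjective (OrderEmbedding.ofMapLEIff f hf_le) fun p => ?_⟩
  obtain ⟨g, hgx, hgp, -⟩ := exists_mem_face_eq_of_le_proj hP hπ le_rfl p.2
  have hg := mem_of (hr := hr) g (hP.rk_bounds p.1)
  have hrk : rk p.1 ≤ x.rk := (hP.rk_mono p.2).trans_eq (rk_proj x)
  exact ⟨⟨of hr g (hP.rk_bounds p.1), le_of_mem hrk hg hgx⟩,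
    Subtype.ext ((proj_eq_face hP hπ hg).trans hgp)⟩

end Free

end CosetFace

theorem finite_polytope_has_finite_regular_cover_preserving_k_faces_general
    {n k : ℤ} (hk : -1 ≤ k) (hkn : k ≤ n) {Q : Type} [PartialOrder Q] (rkQ : Q → ℤ)
    (hQ : IsAbstractPolytope n rkQ) {K : Type*} [PartialOrder K]
    (hKreg : IsRegularPolytope (P := K))
    (hfaces : ∀ F : Q, rkQ F = k → Nonempty (↥(Set.Iic F) ≃o K)) :
    ∃ R : BundledPolytope n, (Finite Q → Finite R.carrier) ∧
      IsRegularPolytope (P := R.carrier) ∧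
      (∃ η : R.carrier → Q, IsPolytopeCovering R.rk rkQ η) ∧
      ∀ F : R.carrier, R.rk F = k → Nonempty (↥(Set.Iic F) ≃o K) := by
  obtain ⟨φ, -⟩ := RankedFlag.exists_of_isChain hQ (IsChain.empty (r := (· ≤ ·)))
  obtain ⟨G, _, r, π, hr, hπ, hinj, hfin⟩ :=
    (RankedFlag.isStringGroup_flipPerm hQ).exists_isStringCGroup_lift hkn fun S hS T _ =>
      RankedFlag.parabolic_flipPerm_inf_le hQ hKreg hk hkn hfaces hS φ
  have hfree : ∀ a ∈ parabolic r (Set.Iio k), ∀ ψ, π a ψ = ψ → a = 1 := fun a ha ψ hψ =>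
    hinj a ha <| RankedFlag.eq_one_of_mem_parabolic_Iio hQ hKreg hk hkn hfaces
      (CosetFace.map_parabolic_eq hQ hπ _ ▸ Subgroup.mem_map_of_mem π ha) hψ
  refine ⟨⟨CosetFace hr, CosetFace.rk, CosetFace.isAbstractPolytope hr hQ.neg_one_le⟩,
    fun _ => ?_, CosetFace.isRegularPolytope hr hQ.neg_one_le,
    ⟨_, CosetFace.isPolytopeCovering_proj (φ := φ) hQ hπ⟩, ?_⟩
  · have := RankedFlag.finite hQ
    have := hfin inferInstance
    exact inferInstanceAs (Finite (CosetFace hr))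
  · rintro x rfl
    obtain ⟨e⟩ := CosetFace.nonempty_orderIso_Iic_proj (φ := φ) hQ hπ hfree
    obtain ⟨i⟩ := hfaces _ (CosetFace.rk_proj x)
    exact ⟨e.trans i⟩

/-- **If all `k`-faces of a finite `n`-polytope `Q` are isomorphic to one fixed
regular `k`-polytope `K`, then `Q` has a finite regular cover `R` all of whose
`k`-faces are isomorphic to `K`.**  The `k`-face determined by a face `F` of rank
`k` is the section `F/F₋₁ = {H : H ≤ F}` (the least face lies below every face). -/
theorem finite_polytope_has_finite_regular_cover_preserving_k_faces
    {n k : ℕ} (hk1 : 1 ≤ k) (hkn : (k : ℤ) ≤ (n : ℤ) - 1)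
    {Q : Type} [PartialOrder Q] [Finite Q] (rkQ : Q → ℤ)
    (hQ : IsAbstractPolytope (n : ℤ) rkQ)
    {K : Type} [PartialOrder K] (rkK : K → ℤ)
    (hK : IsAbstractPolytope (k : ℤ) rkK) (hKreg : IsRegularPolytope (P := K))
    (hfaces : ∀ F : Q, rkQ F = k → Nonempty (↥(Set.Iic F) ≃o K)) :
    ∃ R : BundledPolytope (n : ℤ), Finite R.carrier ∧ IsRegularPolytope (P := R.carrier) ∧
      (∃ η : R.carrier → Q, IsPolytopeCovering R.rk rkQ η) ∧
      ∀ F : R.carrier, R.rk F = k → Nonempty (↥(Set.Iic F) ≃o K) := by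
  obtain ⟨R, hfin, hR⟩ := finite_polytope_has_finite_regular_cover_preserving_k_faces_general
    (by linarith [Int.natCast_nonneg k]) (by linarith) rkQ hQ hKreg hfaces
  exact ⟨R, hfin inferInstance, hR⟩
end
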